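/- arXiv:0902.0132 — 2 statements merged into one kernel-verified Lean document; each statement's English description precedes it below -/
import Mathlib

section
/- First Sampling Lemma: let k be a positive integer and let G and H be edge-weighted graphs on the same vertex set V with |V| ≥ k and all edge weights in [0,1]. If S is chosen uniformly at random from all k-element subsets of V, then with probability at least 1 − 2e^{−√k/8}, | d_□(G[S], H[S]) − d_□(G,H) | ≤ 10/k^{1/4}, where G[S] and H[S] denote the weighted subgraphs induced on S. -/
open Finset
open scoped Classical

-- The weight function of a simple graph: 1 on edges, 0 elsewhere.
noncomputable def adjW {V : Type} (G : SimpleGraph V) : V → V → ℝ :=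
  fun u v => if G.Adj u v then 1 else 0

-- The normalized cut distance `d_□` between two edge-weighted graphs on the same
-- finite vertex set `V`:  `(1/|V|²) · max_{S,T ⊆ V} |e_β(S,T) − e_β'(S,T)|`.
noncomputable def cutDistW {V : Type} [Fintype V] (β β' : V → V → ℝ) : ℝ :=
  (⨆ p : Finset V × Finset V, |∑ s ∈ p.1, ∑ t ∈ p.2, (β s t - β' s t)|) /
    ((Fintype.card V : ℝ) ^ 2)

-- The class of `v` under the partition of `V` given by the colouring `c : V → Fin k`.
noncomputable def classOf {V : Type} [Fintype V] {k : ℕ} (c : V → Fin k) (i : Fin k) :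
    Finset V :=
  Finset.univ.filter (fun v => c v = i)

-- The quotient weighted graph `G_P` of `G` by the partition given by `c : V → Fin k`:
-- the weight of the pair `uv` is the edge density between the classes of `u` and `v`.
noncomputable def quotientW {V : Type} [Fintype V] {k : ℕ} (G : SimpleGraph V)
    (c : V → Fin k) : V → V → ℝ :=
  fun u v =>
    (∑ x ∈ classOf c (c u), ∑ y ∈ classOf c (c v), adjW G x y) /
      (((classOf c (c u)).card : ℝ) * ((classOf c (c v)).card : ℝ))

open scoped BigOperators

/-- Cut norm (unnormalized) of a finite real matrix. -/
noncomputable def cn {A B : Type} [Fintype A] [Fintype B] (M : A → B → ℝ) : ℝ :=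
  ⨆ p : Finset A × Finset B, |∑ s ∈ p.1, ∑ t ∈ p.2, M s t|

lemma le_fsup {T : Type} [Finite T] (f : T → ℝ) (t : T) : f t ≤ ⨆ t, f t :=
  le_ciSup (Set.finite_range f).bddAbove t

lemma le_cn {A B : Type} [Fintype A] [Fintype B] (M : A → B → ℝ) (X : Finset A) (Y : Finset B) :
    |∑ s ∈ X, ∑ t ∈ Y, M s t| ≤ cn M :=
  le_fsup (fun p : Finset A × Finset B => |∑ s ∈ p.1, ∑ t ∈ p.2, M s t|) (X, Y)

lemma cn_nonneg {A B : Type} [Fintype A] [Fintype B] (M : A → B → ℝ) : 0 ≤ cn M :=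
  le_trans (abs_nonneg _) (le_cn M ∅ ∅)

lemma expect_cons {Ω : Type} [Fintype Ω] (m : ℕ) (F : (Fin (m+1) → Ω) → ℝ) :
    𝔼 φ : Fin (m+1) → Ω, F φ = 𝔼 ω : Ω, 𝔼 φ : Fin m → Ω, F (Fin.cons ω φ) := by
  rw [← Finset.expect_product univ univ (fun x : Ω × (Fin m → Ω) => F (Fin.cons x.1 x.2))]
  rw [Finset.univ_product_univ]
  exact (Fintype.expect_equiv (Fin.consEquiv (fun _ => Ω)) _ _ (fun _ => rfl)).symm

lemma iter_sup {T Ω₁ Ω₂ : Type} [Finite T] [Fintype Ω₁] [Fintype Ω₂]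
    (g : Ω₁ → T → ℝ) (h : Ω₂ → T → ℝ)
    (H : ∀ a : T → ℝ, 𝔼 ω, (⨆ t, (a t + g ω t)) ≤ 𝔼 ω, (⨆ t, (a t + h ω t))) :
    ∀ (m : ℕ) (a : T → ℝ), 𝔼 φ : Fin m → Ω₁, (⨆ t, (a t + ∑ i, g (φ i) t)) ≤
      𝔼 φ : Fin m → Ω₂, (⨆ t, (a t + ∑ i, h (φ i) t)) := by
  intro m
  induction m with
  | zero => intro a; simp
  | succ m ih =>
    intro a
    rw [expect_cons, expect_cons]
    calc 𝔼 ω, 𝔼 φ : Fin m → Ω₁, (⨆ t, (a t + ∑ i, g ((Fin.cons ω φ : Fin (m+1) → Ω₁) i) t))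
        = 𝔼 ω, 𝔼 φ : Fin m → Ω₁, (⨆ t, ((a t + g ω t) + ∑ i, g (φ i) t)) := by
          simp [Fin.sum_univ_succ, add_assoc]
      _ ≤ 𝔼 ω, 𝔼 φ : Fin m → Ω₂, (⨆ t, ((a t + g ω t) + ∑ i, h (φ i) t)) :=
          expect_le_expect fun ω _ => ih (fun t => a t + g ω t)
      _ = 𝔼 φ : Fin m → Ω₂, 𝔼 ω, (⨆ t, ((a t + ∑ i, h (φ i) t) + g ω t)) := by
          rw [expect_comm]; simp only [add_right_comm]
      _ ≤ 𝔼 φ : Fin m → Ω₂, 𝔼 ω, (⨆ t, ((a t + ∑ i, h (φ i) t) + h ω t)) :=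
          expect_le_expect fun φ _ => H (fun t => a t + ∑ i, h (φ i) t)
      _ = _ := by
          rw [expect_comm]
          simp only [Fin.sum_univ_succ, Fin.cons_zero, Fin.cons_succ, add_assoc, add_comm, add_left_comm]

lemma iter_sq {Ω : Type} [Fintype Ω] [Nonempty Ω] (x : Ω → ℝ) (h0 : 𝔼 ω, x ω = 0)
    (h1 : ∀ ω, |x ω| ≤ 1) :
    ∀ (m : ℕ) (a : ℝ), 𝔼 φ : Fin m → Ω, (a + ∑ i, x (φ i)) ^ 2 ≤ a ^ 2 + m := by
  intro m
  induction m with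
  | zero => intro a; simp
  | succ m ih =>
    intro a
    rw [expect_cons]
    calc 𝔼 ω, 𝔼 φ : Fin m → Ω, (a + ∑ i, x ((Fin.cons ω φ : Fin (m+1) → Ω) i)) ^ 2
        = 𝔼 ω, 𝔼 φ : Fin m → Ω, ((a + x ω) + ∑ i, x (φ i)) ^ 2 := by
          simp [Fin.sum_univ_succ, add_assoc]
      _ ≤ 𝔼 ω, ((a + x ω) ^ 2 + m) := expect_le_expect fun ω _ => ih _
      _ ≤ 𝔼 ω, ((a ^ 2 + 1 + m) + (2 * a) * x ω) := by
          refine expect_le_expect fun ω _ => ?_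
          have : x ω ^ 2 ≤ 1 := by
            have := h1 ω
            rw [← sq_abs]; nlinarith [abs_nonneg (x ω)]
          nlinarith
      _ = _ := by
          rw [expect_add_distrib, ← mul_expect, h0, Fintype.expect_const]
          push_cast; ring

lemma expect_abs_le {Ω : Type} [Fintype Ω] [Nonempty Ω] (x : Ω → ℝ) (h0 : 𝔼 ω, x ω = 0)
    (h1 : ∀ ω, |x ω| ≤ 1) (m : ℕ) (hm : 0 < m) :
    𝔼 φ : Fin m → Ω, |∑ i, x (φ i)| ≤ √m := by
  have hs : 0 < √(m:ℝ) := by positivity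
  have hsq : √(m:ℝ) ^ 2 = m := Real.sq_sqrt (by positivity)
  have key : 𝔼 φ : Fin m → Ω, (2 * √m) * |∑ i, x (φ i)| ≤ 2 * m := by
    calc 𝔼 φ : Fin m → Ω, (2 * √m) * |∑ i, x (φ i)|
        ≤ 𝔼 φ : Fin m → Ω, ((0 + ∑ i, x (φ i)) ^ 2 + m) := by
          refine expect_le_expect fun φ _ => ?_
          have := sq_nonneg (|∑ i, x (φ i)| - √m)
          have h2 := sq_abs (∑ i, x (φ i))
          nlinarith
      _ ≤ _ := by
          rw [expect_add_distrib, Fintype.expect_const]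
          have := iter_sq x h0 h1 m 0
          linarith
  rw [← mul_expect] at key
  nlinarith

lemma contract {T : Type} [Finite T] [Nonempty T] (a b : T → ℝ) :
    (⨆ t, (a t + max (b t) 0)) + (⨆ t, (a t - max (b t) 0)) ≤
      (⨆ t, (a t + b t)) + (⨆ t, (a t - b t)) := by
  obtain ⟨t, ht⟩ := exists_eq_ciSup_of_finite (f := fun t => a t + max (b t) 0)
  obtain ⟨s, hs⟩ := exists_eq_ciSup_of_finite (f := fun t => a t - max (b t) 0)
  rw [← ht, ← hs]
  have h1 := le_fsup (fun t => a t + b t) t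
  have h2 := le_fsup (fun t => a t + b t) s
  have h3 := le_fsup (fun t => a t - b t) t
  have h4 := le_fsup (fun t => a t - b t) s
  rcases max_cases (b t) 0 with h | h <;> rcases max_cases (b s) 0 with h' | h' <;> linarith

lemma symm_step {V T : Type} [Fintype V] [Nonempty V] [Finite T] [Nonempty T] (b : V → T → ℝ)
    (a : T → ℝ) :
    𝔼 v, (⨆ t, (a t + (max (b v t) 0 - 𝔼 w, max (b w t) 0))) ≤
      𝔼 ω : V × Bool, (⨆ t, (a t + (if ω.2 then 1 else -1) * (2 * b ω.1 t))) := by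
  have e1 : 𝔼 ω : V × Bool, (⨆ t, (a t + (if ω.2 then 1 else -1) * (2 * b ω.1 t))) =
      𝔼 v, ((⨆ t, (a t + 2 * b v t)) + (⨆ t, (a t - 2 * b v t))) / 2 := by
    rw [← Finset.univ_product_univ, Finset.expect_product]
    refine expect_congr rfl fun v _ => ?_
    rw [Fintype.expect_eq_sum_div_card]
    simp [sub_eq_add_neg]
  rw [e1]
  calc 𝔼 v, (⨆ t, (a t + (max (b v t) 0 - 𝔼 w, max (b w t) 0)))
      ≤ 𝔼 v, 𝔼 w, ((⨆ t, (a t + max (2 * b v t) 0)) + (⨆ t, (a t - max (2 * b w t) 0))) / 2 := by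
        refine expect_le_expect fun v _ => ciSup_le fun t => ?_
        rw [← Fintype.expect_const (ι := V) (a t), ← Fintype.expect_const (ι := V) (max (b v t) 0),
          ← expect_sub_distrib, ← expect_add_distrib]
        refine expect_le_expect fun w _ => ?_
        have h1 := le_fsup (fun t => a t + max (2 * b v t) 0) t
        have h2 := le_fsup (fun t => a t - max (2 * b w t) 0) t
        have h3 : ∀ x : ℝ, max (2 * x) 0 = 2 * max x 0 := fun x => by
          rw [mul_max_of_nonneg _ _ (by norm_num)]; simp
        simp only [h3] at h1 h2 ⊢
        linarith
    _ = 𝔼 v, ((⨆ t, (a t + max (2 * b v t) 0)) + (⨆ t, (a t - max (2 * b v t) 0))) / 2 := by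
        simp only [← expect_div, expect_add_distrib, Fintype.expect_const]
    _ ≤ _ := by
        refine expect_le_expect fun v _ => ?_
        have := contract a (fun t => 2 * b v t)
        linarith

/-- Row sampling (with replacement) changes the cut norm little. -/
lemma row_sample {V P : Type} [Fintype V] [Nonempty V] [Fintype P] (M : V → P → ℝ)
    (hM : ∀ v p, |M v p| ≤ 1) (m : ℕ) (hm : 0 < m) :
    𝔼 φ : Fin m → V, cn (fun i p => M (φ i) p) ≤
      m * (cn M / Fintype.card V) + 2 * Fintype.card P * √m := by
  let T := Bool × Finset P
  let b : V → T → ℝ := fun v t => (if t.1 then 1 else -1) * ∑ p ∈ t.2, M v p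
  have hmean : ∀ t, 𝔼 w, max (b w t) 0 ≤ cn M / Fintype.card V := by
    intro t
    rw [Fintype.expect_eq_sum_div_card]
    gcongr
    have : ∑ w, max (b w t) 0 = ∑ w ∈ univ.filter (fun w => 0 ≤ b w t), b w t := by
      rw [Finset.sum_filter]
      refine sum_congr rfl fun w _ => ?_
      split_ifs with h
      · exact max_eq_left h
      · exact max_eq_right (le_of_not_ge h)
    rw [this, ← Finset.mul_sum]
    refine le_trans (le_abs_self _) ?_
    rw [abs_mul]
    have h1 : |(if t.1 then (1:ℝ) else -1)| = 1 := by split_ifs <;> simp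
    rw [h1, one_mul]
    exact le_cn M _ _
  have hcn : ∀ φ : Fin m → V, cn (fun i p => M (φ i) p) ≤
      m * (cn M / Fintype.card V) +
        ⨆ t : T, (0 + ∑ i, (max (b (φ i) t) 0 - 𝔼 w, max (b w t) 0)) := by
    intro φ
    refine ciSup_le fun p => ?_
    have hb : ∃ σ : Bool, |∑ s ∈ p.1, ∑ t ∈ p.2, M (φ s) t| = ∑ s ∈ p.1, b (φ s) (σ, p.2) := by
      rcases abs_cases (∑ s ∈ p.1, ∑ t ∈ p.2, M (φ s) t) with h | h
      · exact ⟨true, by simp [b, h.1]⟩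
      · exact ⟨false, by simp [b, h.1]⟩
    obtain ⟨σ, hσ⟩ := hb
    rw [hσ]
    have h1 : ∑ s ∈ p.1, b (φ s) (σ, p.2) ≤ ∑ s, max (b (φ s) (σ, p.2)) 0 := by
      refine le_trans (sum_le_sum fun s _ => le_max_left _ 0) ?_
      exact sum_le_sum_of_subset_of_nonneg (subset_univ _) fun _ _ _ => le_max_right _ _
    have h2 := le_fsup (fun t : T => 0 + ∑ i, (max (b (φ i) t) 0 - 𝔼 w, max (b w t) 0)) (σ, p.2)
    simp only [sum_sub_distrib, sum_const, card_univ, Fintype.card_fin, nsmul_eq_mul] at h2 ⊢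
    have h3 := mul_le_mul_of_nonneg_left (hmean (σ, p.2)) (Nat.cast_nonneg (α := ℝ) m)
    linarith
  refine le_trans (expect_le_expect fun φ _ => hcn φ) ?_
  rw [expect_add_distrib, Fintype.expect_const]
  gcongr
  refine le_trans (iter_sup (fun (v : V) (t : T) => max (b v t) 0 - 𝔼 w, max (b w t) 0)
    (fun (ω : V × Bool) t => (if ω.2 then 1 else -1) * (2 * b ω.1 t)) (symm_step b) m
    (fun _ => 0)) ?_
  let x : P → V × Bool → ℝ := fun p ω => (if ω.2 then 1 else -1) * M ω.1 p
  have hx0 : ∀ p, 𝔼 ω, x p ω = 0 := by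
    intro p
    rw [← Finset.univ_product_univ, Finset.expect_product]
    refine expect_eq_zero fun v _ => ?_
    rw [Fintype.expect_eq_sum_div_card]
    simp [x]
  have hx1 : ∀ p ω, |x p ω| ≤ 1 := by
    intro p ω
    simp only [x]
    split_ifs <;> simp [hM]
  have hpt : ∀ φ : Fin m → V × Bool,
      (⨆ t : T, (0 + ∑ i, (if (φ i).2 then 1 else -1) * (2 * b (φ i).1 t))) ≤
        2 * ∑ p, |∑ i, x p (φ i)| := by
    intro φ
    refine ciSup_le fun t => ?_
    have : 0 + ∑ i, (if (φ i).2 then 1 else -1) * (2 * b (φ i).1 t) =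
        2 * ((if t.1 then 1 else -1) * ∑ p ∈ t.2, ∑ i, x p (φ i)) := by
      rw [Finset.sum_comm]
      simp only [b, x, Finset.mul_sum, zero_add]
      refine sum_congr rfl fun i _ => sum_congr rfl fun p _ => ?_
      ring
    rw [this]
    refine mul_le_mul_of_nonneg_left ?_ (by norm_num)
    refine le_trans (le_abs_self _) ?_
    rw [abs_mul]
    have h1 : |(if t.1 then (1:ℝ) else -1)| = 1 := by split_ifs <;> simp
    rw [h1, one_mul]
    refine le_trans (abs_sum_le_sum_abs _ _) ?_
    exact sum_le_sum_of_subset_of_nonneg (subset_univ _) fun _ _ _ => abs_nonneg _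
  refine le_trans (expect_le_expect fun φ _ => hpt φ) ?_
  rw [← mul_expect, expect_sum_comm, mul_assoc]
  refine mul_le_mul_of_nonneg_left ?_ (by norm_num)
  refine le_trans (sum_le_sum fun p _ => expect_abs_le (x p) (hx0 p) (hx1 p) m hm) ?_
  simp

/-- Hoeffding's lemma on a finite uniform space. -/
lemma hoeff {ι : Type} (s : Finset ι) (hs : s.Nonempty) (g : ι → ℝ) (c : ℝ) (hc : 0 < c)
    (h : ∀ v ∈ s, |g v - 𝔼 w ∈ s, g w| ≤ c) :
    𝔼 v ∈ s, Real.exp (g v) ≤ Real.exp ((𝔼 v ∈ s, g v) + c ^ 2 / 2) := by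
  set μ := 𝔼 w ∈ s, g w with hμ
  have hpt : ∀ v ∈ s, Real.exp (g v) ≤
      Real.exp μ * (Real.cosh c + (g v - μ) * (Real.sinh c / c)) := by
    intro v hv
    obtain ⟨h1, h2⟩ := abs_le.1 (h v hv)
    set x := g v - μ with hx
    have hgv : g v = μ + x := by rw [hx]; ring
    rw [hgv, Real.exp_add]
    refine mul_le_mul_of_nonneg_left ?_ (Real.exp_pos _).le
    have ha : 0 ≤ (c - x) / (2 * c) := div_nonneg (by linarith) (by linarith)
    have hb : 0 ≤ (c + x) / (2 * c) := div_nonneg (by linarith) (by linarith)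
    have hab : (c - x) / (2 * c) + (c + x) / (2 * c) = 1 := by field_simp; ring
    have hconv := convexOn_exp.2 (Set.mem_univ (-c)) (Set.mem_univ c) ha hb hab
    simp only [smul_eq_mul] at hconv
    have e1 : (c - x) / (2 * c) * -c + (c + x) / (2 * c) * c = x := by field_simp; ring
    rw [e1] at hconv
    refine hconv.trans (le_of_eq ?_)
    rw [Real.cosh_eq, Real.sinh_eq]
    field_simp
    ring
  refine le_trans (expect_le_expect hpt) ?_
  rw [← mul_expect, expect_add_distrib, expect_const hs, ← expect_mul, expect_sub_distrib,
    expect_const hs, ← hμ, sub_self, zero_mul, add_zero, Real.exp_add]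
  exact mul_le_mul_of_nonneg_left (Real.cosh_le_exp_half_sq c) (Real.exp_pos _).le

lemma expect_powersetCard_succ {V : Type} (W : Finset V) (k : ℕ) (hk : k + 1 ≤ W.card)
    (F : Finset V → ℝ) :
    𝔼 S ∈ powersetCard (k+1) W, F S =
      𝔼 v ∈ W, 𝔼 T ∈ powersetCard k (W.erase v), F (insert v T) := by
  have h1 : ∀ v ∈ W, 𝔼 T ∈ powersetCard k (W.erase v), F (insert v T) =
      (∑ T ∈ powersetCard k (W.erase v), F (insert v T)) / ((W.card - 1).choose k : ℝ) := by
    intro v hv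
    rw [expect_eq_sum_div_card, card_powersetCard, card_erase_of_mem hv]
  rw [expect_congr rfl h1, ← expect_div, expect_eq_sum_div_card, expect_eq_sum_div_card,
    card_powersetCard]
  have h2 : ∑ v ∈ W, ∑ T ∈ powersetCard k (W.erase v), F (insert v T) =
      (k + 1) * ∑ S ∈ powersetCard (k+1) W, F S := by
    have : ∀ S ∈ powersetCard (k+1) W, ((k:ℝ) + 1) * F S = ∑ v ∈ S, F S := by
      intro S hS
      rw [sum_const, (mem_powersetCard.1 hS).2, nsmul_eq_mul]; push_cast; ring
    rw [Finset.mul_sum, sum_congr rfl this, Finset.sum_sigma', Finset.sum_sigma']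
    refine Finset.sum_bij' (fun x _ => ⟨insert x.1 x.2, x.1⟩) (fun y _ => ⟨y.2, y.1.erase y.2⟩)
      ?_ ?_ ?_ ?_ ?_
    · rintro ⟨v, T⟩ hx
      simp only [mem_sigma, mem_powersetCard] at hx ⊢
      obtain ⟨hv, hT, hc⟩ := hx
      have hvT : v ∉ T := fun h => by simpa using hT h
      refine ⟨⟨?_, ?_⟩, mem_insert_self _ _⟩
      · exact insert_subset hv (hT.trans (erase_subset _ _))
      · rw [card_insert_of_notMem hvT, hc]
    · rintro ⟨S, v⟩ hx
      simp only [mem_sigma, mem_powersetCard] at hx ⊢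
      obtain ⟨⟨hS, hc⟩, hv⟩ := hx
      refine ⟨hS hv, erase_subset_erase _ hS, ?_⟩
      rw [card_erase_of_mem hv, hc]; rfl
    · rintro ⟨v, T⟩ hx
      simp only [mem_sigma, mem_powersetCard] at hx ⊢
      obtain ⟨hv, hT, hc⟩ := hx
      have hvT : v ∉ T := fun h => by simpa using hT h
      rw [erase_insert hvT]
    · rintro ⟨S, v⟩ hx
      simp only [mem_sigma, mem_powersetCard] at hx ⊢
      rw [insert_erase hx.2]
    · intro x _; rfl
  rw [h2]
  obtain ⟨n, hn⟩ : ∃ n, W.card = n + 1 := ⟨W.card - 1, by omega⟩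
  rw [hn]
  have h3 : ((n:ℝ) + 1) * (n.choose k) = ((n+1).choose (k+1)) * (k + 1) := by
    exact_mod_cast Nat.add_one_mul_choose_eq n k
  have h4 : (0:ℝ) < n.choose k := by
    exact_mod_cast Nat.choose_pos (by omega)
  have h5 : (0:ℝ) < (n+1).choose (k+1) := by
    exact_mod_cast Nat.choose_pos (by omega)
  simp only [Nat.add_sub_cancel]
  push_cast
  field_simp
  linear_combination (∑ i ∈ powersetCard (k + 1) W, F i) * h3

lemma swap_expect {V : Type} (W : Finset V) (k : ℕ) (f : Finset V → ℝ) (c : ℝ) (hc : 0 < c)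
    (hf : ∀ T x y, T.card < k + 1 → |f (insert x T) - f (insert y T)| ≤ c)
    (hk : k + 1 ≤ W.card) (v w : V) (hv : v ∈ W) (hw : w ∈ W) :
    𝔼 T ∈ powersetCard k (W.erase v), f (insert v T) ≤
      (𝔼 T ∈ powersetCard k (W.erase w), f (insert w T)) + c := by
  have hne : (powersetCard k (W.erase v)).Nonempty := by
    rw [powersetCard_nonempty, card_erase_of_mem hv]; omega
  have hmap : ∀ (v w : V) (_ : v ∈ W) (_ : w ∈ W), ∀ T ∈ powersetCard k (W.erase v),
      T.map (Equiv.swap v w).toEmbedding ∈ powersetCard k (W.erase w) := by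
    intro v w hv hw T hT
    rw [mem_powersetCard] at hT ⊢
    refine ⟨?_, by rw [card_map, hT.2]⟩
    intro z hz
    rw [mem_map_equiv, Equiv.symm_swap] at hz
    have := hT.1 hz
    rw [mem_erase] at this ⊢
    rcases eq_or_ne z v with rfl | h1
    · simp at this
      refine ⟨fun h => this.1 h.symm, hv⟩
    · rcases eq_or_ne z w with rfl | h2
      · simp at this
      · rw [Equiv.swap_apply_of_ne_of_ne h1 h2] at this
        exact ⟨h2, this.2⟩
  have e : 𝔼 T ∈ powersetCard k (W.erase w), f (insert w T) =
      𝔼 T ∈ powersetCard k (W.erase v), f (insert w (T.map (Equiv.swap v w).toEmbedding)) := by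
    symm
    refine expect_nbij' (fun T => T.map (Equiv.swap v w).toEmbedding)
      (fun T => T.map (Equiv.swap w v).toEmbedding) (hmap v w hv hw) (hmap w v hw hv) ?_ ?_ ?_
    · intro T _
      ext z; simp [mem_map_equiv, Equiv.swap_comm w v]
    · intro T _
      ext z; simp [mem_map_equiv, Equiv.swap_comm w v]
    · intro T _; rfl
  rw [e, ← expect_const hne c, ← expect_add_distrib]
  refine expect_le_expect fun T hT => ?_
  rw [mem_powersetCard] at hT
  have hvT : v ∉ T := fun h => by simpa using hT.1 h
  rcases eq_or_ne v w with rfl | hvw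
  · simp; linarith
  by_cases hwT : w ∈ T
  · have : insert v T = insert w (T.map (Equiv.swap v w).toEmbedding) := by
      ext z
      rw [mem_insert, mem_insert, mem_map_equiv, Equiv.symm_swap]
      rcases eq_or_ne z v with rfl | h1
      · simp [hwT]
      · rcases eq_or_ne z w with rfl | h2
        · simp [hwT]
        · rw [Equiv.swap_apply_of_ne_of_ne h1 h2]; simp [h1, h2]
    rw [this]; linarith
  · have : T = T.map (Equiv.swap v w).toEmbedding := by
      ext z
      rw [mem_map_equiv, Equiv.symm_swap]
      rcases eq_or_ne z v with rfl | h1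
      · simp [hwT, hvT]
      · rcases eq_or_ne z w with rfl | h2
        · simp [hwT, hvT]
        · rw [Equiv.swap_apply_of_ne_of_ne h1 h2]
    rw [← this]
    have := (abs_le.1 (hf T v w (by omega))).2
    linarith

/-- Sub-Gaussian bound for Lipschitz functions of a random `k`-subset. -/
lemma mgf_bound {V : Type} (c : ℝ) (hc : 0 < c) : ∀ (k : ℕ) (W : Finset V) (f : Finset V → ℝ),
    k ≤ W.card → (∀ T x y, T.card < k → |f (insert x T) - f (insert y T)| ≤ c) →
    𝔼 S ∈ powersetCard k W, Real.exp (f S) ≤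
      Real.exp ((𝔼 S ∈ powersetCard k W, f S) + k * (c ^ 2 / 2)) := by
  intro k
  induction k with
  | zero => intro W f _ _; simp
  | succ k ih =>
    intro W f hk hf
    have hW : W.Nonempty := card_pos.1 (by omega)
    rw [expect_powersetCard_succ W k hk, expect_powersetCard_succ W k hk]
    set g : V → ℝ := fun v => 𝔼 T ∈ powersetCard k (W.erase v), f (insert v T) with hg
    have h1 : ∀ v ∈ W, 𝔼 T ∈ powersetCard k (W.erase v), Real.exp (f (insert v T)) ≤
        Real.exp (g v) * Real.exp (k * (c ^ 2 / 2)) := by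
      intro v hv
      rw [← Real.exp_add]
      refine ih (W.erase v) (fun T => f (insert v T)) (by rw [card_erase_of_mem hv]; omega) ?_
      intro T x y hT
      simp only [Finset.insert_comm v]
      exact hf _ _ _ (lt_of_le_of_lt (card_insert_le _ _) (by omega))
    refine le_trans (expect_le_expect h1) ?_
    rw [← expect_mul]
    have h2 : ∀ v ∈ W, |g v - 𝔼 w ∈ W, g w| ≤ c := by
      intro v hv
      rw [abs_le]
      constructor
      · have : 𝔼 w ∈ W, g w ≤ g v + c :=
          expect_le hW fun w hw => swap_expect W k f c hc hf hk w v hw hv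
        linarith
      · have : g v - c ≤ 𝔼 w ∈ W, g w :=
          le_expect hW fun w hw => by
            have := swap_expect W k f c hc hf hk v w hv hw
            simp only [hg]; linarith
        linarith
    have h3 := hoeff W hW g c hc h2
    refine le_trans (mul_le_mul_of_nonneg_right h3 (Real.exp_pos _).le) ?_
    rw [← Real.exp_add]
    apply le_of_eq
    congr 1
    push_cast; ring

lemma markov_exp {ι : Type} (s : Finset ι) (g : ι → ℝ) (μ B t : ℝ) (hs : s.Nonempty)
    (h : 𝔼 S ∈ s, Real.exp (g S) ≤ Real.exp (μ + B)) :
    ((s.filter (fun S => μ + t < g S)).card : ℝ) ≤ Real.exp (B - t) * s.card := by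
  rw [expect_eq_sum_div_card, div_le_iff₀ (by exact_mod_cast hs.card_pos)] at h
  have h1 : ((s.filter (fun S => μ + t < g S)).card : ℝ) * Real.exp (μ + t) ≤
      ∑ S ∈ s, Real.exp (g S) := by
    refine le_trans ?_ (sum_le_sum_of_subset_of_nonneg (filter_subset (fun S => μ + t < g S) s)
      fun _ _ _ => (Real.exp_pos _).le)
    rw [← nsmul_eq_mul]
    refine card_nsmul_le_sum _ _ _ fun S hS => Real.exp_le_exp.2 (mem_filter.1 hS).2.le
  have h2 := h1.trans h
  have h3 : Real.exp (μ + B) = Real.exp (μ + t) * Real.exp (B - t) := by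
    rw [← Real.exp_add]; congr 1; ring
  rw [h3] at h2
  have := Real.exp_pos (μ + t)
  nlinarith

/-- Unnormalized cut norm of the submatrix on `S × S`. -/
noncomputable def NS {V : Type} [Fintype V] (U : V → V → ℝ) (S : Finset V) : ℝ :=
  ⨆ p : Finset V × Finset V, |∑ s ∈ p.1 ∩ S, ∑ t ∈ p.2 ∩ S, U s t|

lemma le_NS {V : Type} [Fintype V] (U : V → V → ℝ) (S A B : Finset V) (hA : A ⊆ S) (hB : B ⊆ S) :
    |∑ s ∈ A, ∑ t ∈ B, U s t| ≤ NS U S := by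
  have := le_fsup (fun p : Finset V × Finset V => |∑ s ∈ p.1 ∩ S, ∑ t ∈ p.2 ∩ S, U s t|) (A, B)
  simp only [inter_eq_left.2 hA, inter_eq_left.2 hB] at this
  exact this

lemma NS_le {V : Type} [Fintype V] (U : V → V → ℝ) (S : Finset V) (C : ℝ)
    (h : ∀ A B, A ⊆ S → B ⊆ S → |∑ s ∈ A, ∑ t ∈ B, U s t| ≤ C) : NS U S ≤ C :=
  ciSup_le fun p => h _ _ inter_subset_right inter_subset_right

lemma NS_nonneg {V : Type} [Fintype V] (U : V → V → ℝ) (S : Finset V) : 0 ≤ NS U S :=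
  le_trans (abs_nonneg _) (le_NS U S ∅ ∅ (empty_subset _) (empty_subset _))

lemma NS_univ {V : Type} [Fintype V] (U : V → V → ℝ) : NS U univ = cn U := by
  simp [NS, cn]

lemma NS_attain {V : Type} [Fintype V] (U : V → V → ℝ) (S : Finset V) :
    ∃ (A B : Finset V) (ε : ℝ), A ⊆ S ∧ B ⊆ S ∧ |ε| = 1 ∧
      NS U S = ∑ s ∈ S, ∑ t ∈ S, ε * (if s ∈ A ∧ t ∈ B then U s t else 0) := by
  obtain ⟨p, hp⟩ := exists_eq_ciSup_of_finite
    (f := fun p : Finset V × Finset V => |∑ s ∈ p.1 ∩ S, ∑ t ∈ p.2 ∩ S, U s t|)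
  have key : ∑ s ∈ S, ∑ t ∈ S, (if s ∈ p.1 ∩ S ∧ t ∈ p.2 ∩ S then U s t else 0) =
      ∑ s ∈ p.1 ∩ S, ∑ t ∈ p.2 ∩ S, U s t := by
    rw [← sum_subset (inter_subset_right : p.1 ∩ S ⊆ S)]
    · refine sum_congr rfl fun s hs => ?_
      rw [← sum_subset (inter_subset_right : p.2 ∩ S ⊆ S)]
      · refine sum_congr rfl fun t ht => ?_
        rw [if_pos ⟨hs, ht⟩]
      · intro t _ ht
        rw [if_neg fun h => ht h.2]
    · intro s _ hs
      exact sum_eq_zero fun t _ => if_neg fun h => hs h.1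
  have hN : NS U S = |∑ s ∈ p.1 ∩ S, ∑ t ∈ p.2 ∩ S, U s t| := hp.symm
  rcases abs_cases (∑ s ∈ p.1 ∩ S, ∑ t ∈ p.2 ∩ S, U s t) with h | h
  · refine ⟨p.1 ∩ S, p.2 ∩ S, 1, inter_subset_right, inter_subset_right, by simp, ?_⟩
    simp only [← Finset.mul_sum]
    rw [key, hN, h.1, one_mul]
  · refine ⟨p.1 ∩ S, p.2 ∩ S, -1, inter_subset_right, inter_subset_right, by simp, ?_⟩
    simp only [← Finset.mul_sum]
    rw [key, hN, h.1, neg_one_mul]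

lemma abs_rect_le {V : Type} (U : V → V → ℝ) (hU : ∀ u v, |U u v| ≤ 1) (A B : Finset V) :
    |∑ s ∈ A, ∑ t ∈ B, U s t| ≤ A.card * B.card := by
  refine le_trans (abs_sum_le_sum_abs _ _) ?_
  rw [← nsmul_eq_mul]
  refine sum_le_card_nsmul _ _ _ fun s _ => ?_
  refine le_trans (abs_sum_le_sum_abs _ _) ?_
  refine le_trans (sum_le_card_nsmul _ _ 1 fun t _ => hU s t) ?_
  simp

lemma NS_le_sq {V : Type} [Fintype V] (U : V → V → ℝ) (hU : ∀ u v, |U u v| ≤ 1) (S : Finset V) :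
    NS U S ≤ (S.card : ℝ) ^ 2 := by
  refine NS_le U S _ fun A B hA hB => (abs_rect_le U hU A B).trans ?_
  have h1 : (A.card : ℝ) ≤ S.card := by exact_mod_cast card_le_card hA
  have h2 : (B.card : ℝ) ≤ S.card := by exact_mod_cast card_le_card hB
  rw [sq]; gcongr

lemma NS_mono {V : Type} [Fintype V] (U : V → V → ℝ) {S T : Finset V} (h : S ⊆ T) :
    NS U S ≤ NS U T :=
  NS_le U S _ fun A B hA hB => le_NS U T A B (hA.trans h) (hB.trans h)

lemma NS_insert {V : Type} [Fintype V] (U : V → V → ℝ) (hU : ∀ u v, |U u v| ≤ 1)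
    (T : Finset V) (x : V) : NS U (insert x T) ≤ NS U T + (2 * T.card + 1) := by
  refine NS_le U _ _ fun A B hA hB => ?_
  have hA' : A.erase x ⊆ T := by rwa [← subset_insert_iff]
  have hB' : B.erase x ⊆ T := by rwa [← subset_insert_iff]
  have h0 := le_NS U T _ _ hA' hB'
  have hAx : (∑ s ∈ A, ∑ t ∈ B, U s t) =
      ∑ s ∈ A.erase x, ∑ t ∈ B, U s t + ∑ s ∈ A ∩ {x}, ∑ t ∈ B, U s t := by
    by_cases hx : x ∈ A
    · rw [inter_singleton_of_mem hx, sum_singleton, sum_erase_add _ _ hx]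
    · rw [inter_singleton_of_notMem hx, sum_empty, erase_eq_of_notMem hx, add_zero]
  have hBx : ∀ s, (∑ t ∈ B, U s t) = ∑ t ∈ B.erase x, U s t + ∑ t ∈ B ∩ {x}, U s t := by
    intro s
    by_cases hx : x ∈ B
    · rw [inter_singleton_of_mem hx, sum_singleton, sum_erase_add _ _ hx]
    · rw [inter_singleton_of_notMem hx, sum_empty, erase_eq_of_notMem hx, add_zero]
  have h1 := abs_rect_le U hU (A ∩ {x}) B
  have h2 := abs_rect_le U hU (A.erase x) (B ∩ {x})
  have h3 : (((A ∩ {x}).card : ℕ) : ℝ) ≤ 1 := by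
    exact_mod_cast (card_le_card inter_subset_right).trans (card_singleton x).le
  have h4 : (((B ∩ {x}).card : ℕ) : ℝ) ≤ 1 := by
    exact_mod_cast (card_le_card inter_subset_right).trans (card_singleton x).le
  have h5 : (B.card : ℝ) ≤ T.card + 1 := by
    exact_mod_cast (card_le_card hB).trans (card_insert_le _ _)
  have h6 : ((A.erase x).card : ℝ) ≤ T.card := by exact_mod_cast card_le_card hA'
  have h7 : (((A ∩ {x}).card : ℕ) : ℝ) * B.card ≤ 1 * (T.card + 1) := by gcongr
  have h8 : ((A.erase x).card : ℝ) * ((B ∩ {x}).card : ℕ) ≤ T.card * 1 := by gcongr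
  rw [hAx]
  simp only [hBx, sum_add_distrib] at h1 ⊢
  refine le_trans (abs_add_le _ _) ?_
  have h9 := abs_add_le (∑ s ∈ A.erase x, ∑ t ∈ B.erase x, U s t)
    (∑ s ∈ A.erase x, ∑ t ∈ B ∩ {x}, U s t)
  linarith

lemma NS_lip {V : Type} [Fintype V] (U : V → V → ℝ) (hU : ∀ u v, |U u v| ≤ 1)
    (T : Finset V) (x y : V) : |NS U (insert x T) - NS U (insert y T)| ≤ 2 * T.card + 1 := by
  have h1 := NS_insert U hU T x
  have h2 := NS_insert U hU T y
  have h3 := NS_mono U (subset_insert x T)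
  have h4 := NS_mono U (subset_insert y T)
  rw [abs_le]; constructor <;> linarith

/-- Replace the diagonal by zero. -/
noncomputable def offd {V : Type} (U : V → V → ℝ) : V → V → ℝ := fun u v => if u = v then 0 else U u v

lemma offd_bd {V : Type} (U : V → V → ℝ) (hU : ∀ u v, |U u v| ≤ 1) : ∀ u v, |offd U u v| ≤ 1 := by
  intro u v
  unfold offd
  split_ifs
  · simp
  · exact hU u v

lemma offd_rect {V : Type} (U : V → V → ℝ) (hU : ∀ u v, |U u v| ≤ 1) (S A B : Finset V)
    (hA : A ⊆ S) :
    |∑ s ∈ A, ∑ t ∈ B, U s t - ∑ s ∈ A, ∑ t ∈ B, offd U s t| ≤ S.card := by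
  rw [← sum_sub_distrib]
  refine le_trans (abs_sum_le_sum_abs _ _) ?_
  have h : ∀ s ∈ A, |∑ t ∈ B, U s t - ∑ t ∈ B, offd U s t| ≤ 1 := by
    intro s _
    rw [← sum_sub_distrib]
    have : ∀ t ∈ B, U s t - offd U s t = if s = t then U s t else 0 := by
      intro t _
      unfold offd
      split_ifs <;> simp
    rw [sum_congr rfl this, sum_ite_eq]
    split_ifs
    · exact hU s s
    · simp
  refine le_trans (sum_le_card_nsmul _ _ 1 h) ?_
  rw [nsmul_eq_mul, mul_one]
  exact_mod_cast card_le_card hA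

lemma NS_le_offd {V : Type} [Fintype V] (U : V → V → ℝ) (hU : ∀ u v, |U u v| ≤ 1) (S : Finset V) :
    NS U S ≤ NS (offd U) S + S.card := by
  refine NS_le U S _ fun A B hA hB => ?_
  have h1 := le_NS (offd U) S A B hA hB
  have h2 := offd_rect U hU S A B hA
  have h3 := abs_sub_abs_le_abs_sub (∑ s ∈ A, ∑ t ∈ B, U s t) (∑ s ∈ A, ∑ t ∈ B, offd U s t)
  linarith

lemma offd_NS_le {V : Type} [Fintype V] (U : V → V → ℝ) (hU : ∀ u v, |U u v| ≤ 1) (S : Finset V) :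
    NS (offd U) S ≤ NS U S + S.card := by
  refine NS_le _ S _ fun A B hA hB => ?_
  have h1 := le_NS U S A B hA hB
  have h2 := offd_rect U hU S A B hA
  rw [abs_sub_comm] at h2
  have h3 := abs_sub_abs_le_abs_sub (∑ s ∈ A, ∑ t ∈ B, offd U s t) (∑ s ∈ A, ∑ t ∈ B, U s t)
  linarith

/-- two-point transitivity inside `K` -/
lemma exists_perm_pair {V : Type} (K : Finset V) (u v x y : V) (hu : u ∈ K) (hv : v ∈ K)
    (hx : x ∈ K) (hy : y ∈ K) (huv : u ≠ v) (hxy : x ≠ y) :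
    ∃ τ : Equiv.Perm V, τ u = x ∧ τ v = y ∧ K.map τ.toEmbedding = K := by
  have hmap : ∀ a b, a ∈ K → b ∈ K → ∀ z, z ∈ K → Equiv.swap a b z ∈ K := by
    intro a b ha hb z hz
    by_cases h1 : z = a
    · rw [h1, Equiv.swap_apply_left]; exact hb
    by_cases h2 : z = b
    · rw [h2, Equiv.swap_apply_right]; exact ha
    rw [Equiv.swap_apply_of_ne_of_ne h1 h2]; exact hz
  refine ⟨Equiv.swap (Equiv.swap u x v) y * Equiv.swap u x, ?_, ?_, ?_⟩
  · rw [Equiv.Perm.mul_apply, Equiv.swap_apply_left]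
    apply Equiv.swap_apply_of_ne_of_ne
    · intro h
      have : Equiv.swap u x u = Equiv.swap u x v := by rw [Equiv.swap_apply_left]; exact h
      exact huv ((Equiv.swap u x).injective this)
    · exact hxy
  · rw [Equiv.Perm.mul_apply, Equiv.swap_apply_left]
  · apply eq_of_subset_of_card_le
    · intro z hz
      rw [mem_map] at hz
      obtain ⟨w, hw, rfl⟩ := hz
      exact hmap _ _ (hmap _ _ hu hx _ hv) hy _ (hmap _ _ hu hx _ hw)
    · rw [card_map]

lemma map_mul' {V : Type} (K : Finset V) (π τ : Equiv.Perm V) :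
    K.map (π * τ).toEmbedding = (K.map τ.toEmbedding).map π.toEmbedding := by
  rw [map_map]; rfl

lemma pair_avg {V : Type} [Fintype V] (K : Finset V) (H : Finset V → V → V → ℝ)
    (h0 : ∀ S x, H S x x = 0) (u v : V) (hu : u ∈ K) (hv : v ∈ K) :
    ((K.card : ℝ) * (K.card - 1)) *
        𝔼 π : Equiv.Perm V, H (K.map π.toEmbedding) (π u) (π v) =
      (if u = v then 0 else 1) * 𝔼 π : Equiv.Perm V, ∑ x ∈ K.map π.toEmbedding,
        ∑ y ∈ K.map π.toEmbedding, H (K.map π.toEmbedding) x y := by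
  by_cases huv : u = v
  · subst huv; simp [h0]
  rw [if_neg huv, one_mul]
  have e1 : ∀ π : Equiv.Perm V, ∑ x ∈ K.map π.toEmbedding,
        ∑ y ∈ K.map π.toEmbedding, H (K.map π.toEmbedding) x y =
      ∑ x ∈ K, ∑ y ∈ K, H (K.map π.toEmbedding) (π x) (π y) := by
    intro π
    simp only [sum_map, Equiv.coe_toEmbedding]
  simp only [e1]
  rw [expect_sum_comm]
  simp only [expect_sum_comm]
  set A := 𝔼 π : Equiv.Perm V, H (K.map π.toEmbedding) (π u) (π v) with hA
  have e2 : ∀ x ∈ K, ∀ y ∈ K, 𝔼 π : Equiv.Perm V, H (K.map π.toEmbedding) (π x) (π y) =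
      A - if x = y then A else 0 := by
    intro x hx y hy
    split_ifs with hxy
    · subst hxy; simp [h0]
    · obtain ⟨τ, h1, h2, h3⟩ := exists_perm_pair K u v x y hu hv hx hy huv hxy
      rw [sub_zero, hA]
      symm
      refine (Fintype.expect_equiv (Equiv.mulRight τ) _ _ fun π => ?_).symm
      simp only [Equiv.coe_mulRight, map_mul', h3, Equiv.Perm.mul_apply, h1, h2]
  rw [sum_congr rfl fun x hx => sum_congr rfl fun y hy => e2 x hx y hy]
  have e3 : ∀ x ∈ K, ∑ y ∈ K, (A - if x = y then A else 0) = (K.card - 1) * A := by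
    intro x hx
    rw [sum_sub_distrib, sum_ite_eq, if_pos hx, sum_const, nsmul_eq_mul]; ring
  rw [sum_congr rfl e3, sum_const, nsmul_eq_mul]; ring

lemma exists_perm_map {V : Type} [Fintype V] (K L : Finset V) (h : K.card = L.card) :
    ∃ τ : Equiv.Perm V, K.map τ.toEmbedding = L := by
  let e : {x // x ∈ K} ≃ {x // x ∈ L} := Finset.equivOfCardEq h
  refine ⟨e.extendSubtype, ?_⟩
  apply eq_of_subset_of_card_le
  · intro z hz
    rw [mem_map] at hz
    obtain ⟨w, hw, rfl⟩ := hz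
    exact e.extendSubtype_mem w hw
  · rw [card_map, h]

lemma unif {V : Type} [Fintype V] (k : ℕ) (K : Finset V) (hK : K.card = k) (F : Finset V → ℝ) :
    𝔼 π : Equiv.Perm V, F (K.map π.toEmbedding) = 𝔼 S ∈ powersetCard k (univ : Finset V), F S := by
  have hne : (powersetCard k (univ : Finset V)).Nonempty :=
    ⟨K, mem_powersetCard.2 ⟨subset_univ _, hK⟩⟩
  have h1 : ∀ L ∈ powersetCard k (univ : Finset V),
      𝔼 π : Equiv.Perm V, F (L.map π.toEmbedding) = 𝔼 π : Equiv.Perm V, F (K.map π.toEmbedding) := by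
    intro L hL
    obtain ⟨τ, hτ⟩ := exists_perm_map K L (by rw [hK, (mem_powersetCard.1 hL).2])
    refine Fintype.expect_equiv (Equiv.mulRight τ) _ _ fun π => ?_
    simp only [Equiv.coe_mulRight, map_mul', hτ]
  rw [← expect_const hne (𝔼 π : Equiv.Perm V, F (K.map π.toEmbedding)), ← expect_congr rfl h1,
    expect_comm]
  rw [← Fintype.expect_const (ι := Equiv.Perm V) (𝔼 S ∈ powersetCard k (univ : Finset V), F S)]
  refine expect_congr rfl fun π _ => ?_
  refine expect_nbij' (fun S => S.map π.toEmbedding) (fun S => S.map π.symm.toEmbedding) ?_ ?_ ?_ ?_ ?_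
  · intro S hS; simpa [mem_powersetCard] using hS
  · intro S hS; simpa [mem_powersetCard] using hS
  · intro S _; ext z; simp [mem_map_equiv]
  · intro S _; ext z; simp [mem_map_equiv]
  · intro S _; rfl

lemma lower_avg {V : Type} [Fintype V] (U : V → V → ℝ) (h0 : ∀ u, U u u = 0) (k : ℕ)
    (hk : 2 ≤ k) (hkn : k ≤ Fintype.card V) :
    ((k : ℝ) * (k - 1)) * NS U univ ≤ ((Fintype.card V : ℝ) * (Fintype.card V - 1)) *
      𝔼 S ∈ powersetCard k (univ : Finset V), NS U S := by
  obtain ⟨K, _, hK⟩ := exists_subset_card_eq (s := (univ : Finset V)) (n := k)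
    (by rwa [card_univ])
  rw [← unif k K hK]
  obtain ⟨A, B, ε, _, _, hε, hN⟩ := NS_attain U univ
  let h : V → V → ℝ := fun s t => ε * (if s ∈ A ∧ t ∈ B then U s t else 0)
  have hpt : ∀ π : Equiv.Perm V, ∑ u ∈ K, ∑ v ∈ K, h (π u) (π v) ≤ NS U (K.map π.toEmbedding) := by
    intro π
    have h1 := le_NS U (K.map π.toEmbedding) ((K.map π.toEmbedding).filter (· ∈ A))
      ((K.map π.toEmbedding).filter (· ∈ B)) (filter_subset _ _) (filter_subset _ _)
    refine le_trans ?_ h1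
    have h2 : ∑ u ∈ K, ∑ v ∈ K, h (π u) (π v) = ε * ∑ s ∈ (K.map π.toEmbedding).filter (· ∈ A),
        ∑ t ∈ (K.map π.toEmbedding).filter (· ∈ B), U s t := by
      simp only [sum_filter, sum_map, Equiv.coe_toEmbedding, Finset.mul_sum, h]
      refine sum_congr rfl fun s _ => ?_
      by_cases hs : π s ∈ A
      · simp [hs, Finset.mul_sum]
      · simp [hs]
    rw [h2]
    refine le_trans (le_abs_self _) ?_
    rw [abs_mul, hε, one_mul]
  have hpair : ∀ u v, ((Fintype.card V : ℝ) * (Fintype.card V - 1)) *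
      𝔼 π : Equiv.Perm V, h (π u) (π v) = (if u = v then 0 else 1) * NS U univ := by
    intro u v
    have := pair_avg (univ : Finset V) (fun _ => h) (by intro S x; simp [h, h0]) u v
      (mem_univ _) (mem_univ _)
    simp only [card_univ, map_univ_equiv, Fintype.expect_const] at this
    rw [this, hN]
  have hmain := expect_le_expect (s := univ) fun π _ => hpt π
  rw [expect_sum_comm] at hmain
  simp only [expect_sum_comm] at hmain
  have hnn : (0:ℝ) ≤ (Fintype.card V : ℝ) * (Fintype.card V - 1) := by
    have : (2:ℝ) ≤ Fintype.card V := by exact_mod_cast hk.trans hkn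
    nlinarith
  refine le_trans (le_of_eq ?_) (mul_le_mul_of_nonneg_left hmain hnn)
  simp only [Finset.mul_sum, hpair]
  have e3 : ∀ x ∈ K, ∑ y ∈ K, (if x = y then (0:ℝ) else 1) * NS U univ = (k - 1) * NS U univ := by
    intro x hx
    have : ∀ y ∈ K, (if x = y then (0:ℝ) else 1) * NS U univ =
        NS U univ - if x = y then NS U univ else 0 := by
      intro y _; split_ifs <;> simp
    rw [sum_congr rfl this, sum_sub_distrib, sum_ite_eq, if_pos hx, sum_const, nsmul_eq_mul, hK]
    ring
  rw [sum_congr rfl e3, sum_const, nsmul_eq_mul, hK]; ring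

lemma decouple {V : Type} [Fintype V] (U : V → V → ℝ) (h0 : ∀ u, U u u = 0) (k m : ℕ)
    (hm : 2 * m ≤ k) (hkn : k ≤ Fintype.card V) (hk : 2 ≤ k) (φ ψ : Fin m → V) :
    ((m : ℝ) ^ 2 - ∑ i, ∑ j, if φ i = ψ j then 1 else 0) *
        (𝔼 S ∈ powersetCard k (univ : Finset V), NS U S) ≤
      ((k : ℝ) * (k - 1)) * 𝔼 π : Equiv.Perm V, cn (fun i j => U (π (φ i)) (π (ψ j))) := by
  have hcard : (univ.image φ ∪ univ.image ψ).card ≤ k := by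
    refine (card_union_le _ _).trans ?_
    have h1 := card_image_le (s := univ) (f := φ)
    have h2 := card_image_le (s := univ) (f := ψ)
    simp only [card_univ, Fintype.card_fin] at h1 h2
    omega
  obtain ⟨K, hsub, _, hK⟩ := exists_subsuperset_card_eq (subset_univ _) hcard
    (by rwa [card_univ])
  have hφ : ∀ i, φ i ∈ K := fun i => hsub (by simp)
  have hψ : ∀ i, ψ i ∈ K := fun i => hsub (by simp)
  choose A B ε hA hB hε hN using NS_attain U
  let H : Finset V → V → V → ℝ := fun S s t => ε S * (if s ∈ A S ∧ t ∈ B S then U s t else 0)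
  have hpt : ∀ π : Equiv.Perm V, ∑ i, ∑ j, H (K.map π.toEmbedding) (π (φ i)) (π (ψ j)) ≤
      cn (fun i j => U (π (φ i)) (π (ψ j))) := by
    intro π
    set S := K.map π.toEmbedding
    have h1 := le_cn (fun i j => U (π (φ i)) (π (ψ j))) (univ.filter fun i => π (φ i) ∈ A S)
      (univ.filter fun i => π (ψ i) ∈ B S)
    refine le_trans ?_ h1
    have h2 : ∑ i, ∑ j, H S (π (φ i)) (π (ψ j)) =
        ε S * ∑ i ∈ univ.filter (fun i => π (φ i) ∈ A S),
          ∑ j ∈ univ.filter (fun i => π (ψ i) ∈ B S), U (π (φ i)) (π (ψ j)) := by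
      simp only [sum_filter, Finset.mul_sum, H]
      refine sum_congr rfl fun s _ => ?_
      by_cases hs : π (φ s) ∈ A S
      · simp [hs, Finset.mul_sum]
      · simp [hs]
    rw [h2]
    refine le_trans (le_abs_self _) ?_
    rw [abs_mul, hε, one_mul]
  have hpair : ∀ i j, ((k : ℝ) * (k - 1)) *
      𝔼 π : Equiv.Perm V, H (K.map π.toEmbedding) (π (φ i)) (π (ψ j)) =
      (if φ i = ψ j then 0 else 1) * (𝔼 S ∈ powersetCard k (univ : Finset V), NS U S) := by
    intro i j
    have := pair_avg K H (by intro S x; simp [H, h0]) (φ i) (ψ j) (hφ i) (hψ j)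
    rw [hK] at this
    rw [this, ← unif k K hK]
    congr 1
    refine expect_congr rfl fun π _ => ?_
    rw [hN]
  have hmain := expect_le_expect (s := univ) fun π _ => hpt π
  rw [expect_sum_comm] at hmain
  simp only [expect_sum_comm] at hmain
  have hnn : (0:ℝ) ≤ (k : ℝ) * (k - 1) := by
    have : (2:ℝ) ≤ k := by exact_mod_cast hk
    nlinarith
  refine le_trans (le_of_eq ?_) (mul_le_mul_of_nonneg_left hmain hnn)
  simp only [Finset.mul_sum, hpair]
  simp only [← Finset.sum_mul]
  congr 1
  have : ∀ i j, (if φ i = ψ j then (0:ℝ) else 1) = 1 - if φ i = ψ j then 1 else 0 := by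
    intro i j; split_ifs <;> simp
  simp only [this, sum_sub_distrib]
  simp [sq]

lemma cn_transpose {A B : Type} [Fintype A] [Fintype B] (M : A → B → ℝ) :
    cn (fun b a => M a b) ≤ cn M := by
  refine ciSup_le fun p => ?_
  rw [Finset.sum_comm]
  exact le_cn M _ _

lemma coinc {V : Type} [Fintype V] [Nonempty V] (m : ℕ) :
    𝔼 φ : Fin m → V, 𝔼 ψ : Fin m → V, (∑ i, ∑ j, if φ i = ψ j then (1:ℝ) else 0) =
      (m:ℝ) ^ 2 / Fintype.card V := by
  have h1 : ∀ (x : V) (j : Fin m), 𝔼 ψ : Fin m → V, (if x = ψ j then (1:ℝ) else 0) =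
      1 / Fintype.card V := by
    intro x j
    have h2 : ∀ y : V, 𝔼 ψ : Fin m → V, (if y = ψ j then (1:ℝ) else 0) =
        𝔼 ψ : Fin m → V, (if x = ψ j then (1:ℝ) else 0) := by
      intro y
      refine Fintype.expect_equiv (Equiv.arrowCongr (Equiv.refl _) (Equiv.swap x y)) _ _ fun ψ => ?_
      have : (y = ψ j) ↔ (x = (Equiv.swap x y) (ψ j)) := by
        constructor
        · rintro rfl; simp
        · intro h
          have := congrArg (Equiv.swap x y) h
          simpa using this
      simp [this]
    have h3 : ∑ y : V, 𝔼 ψ : Fin m → V, (if y = ψ j then (1:ℝ) else 0) = 1 := by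
      rw [← expect_sum_comm]
      simp
    rw [sum_congr rfl fun y _ => h2 y, sum_const, card_univ, nsmul_eq_mul] at h3
    have : (0:ℝ) < Fintype.card V := by exact_mod_cast Fintype.card_pos
    field_simp
    linarith
  have h4 : ∀ φ : Fin m → V, 𝔼 ψ : Fin m → V, (∑ i, ∑ j, if φ i = ψ j then (1:ℝ) else 0) =
      (m:ℝ) ^ 2 / Fintype.card V := by
    intro φ
    rw [expect_sum_comm]
    simp only [expect_sum_comm, h1]
    simp; ring
  simp only [h4, Fintype.expect_const]

lemma upper_avg {V : Type} [Fintype V] (U : V → V → ℝ) (h0 : ∀ u, U u u = 0)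
    (hU : ∀ u v, |U u v| ≤ 1) (k m : ℕ)
    (hm : 2 * m ≤ k) (hm0 : 0 < m) (hkn : k ≤ Fintype.card V) :
    (𝔼 S ∈ powersetCard k (univ : Finset V), NS U S) / (k : ℝ) ^ 2 ≤
      NS U univ / (Fintype.card V : ℝ) ^ 2 + 4 / √m + 1 / Fintype.card V := by
  have hk : 2 ≤ k := by omega
  have hn0 : 0 < Fintype.card V := by omega
  haveI : Nonempty V := Fintype.card_pos_iff.1 hn0
  have hnpos : (0:ℝ) < Fintype.card V := by exact_mod_cast hn0
  have hkpos : (2:ℝ) ≤ k := by exact_mod_cast hk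
  have hmpos : (0:ℝ) < m := by exact_mod_cast hm0
  set E := 𝔼 S ∈ powersetCard k (univ : Finset V), NS U S with hE
  set n : ℝ := (Fintype.card V : ℝ) with hn
  set D := 𝔼 φ : Fin m → V, 𝔼 ψ : Fin m → V, cn (fun i j => U (φ i) (ψ j)) with hD
  have hDle : D ≤ m * ((m * (NS U univ / n) + 2 * n * √m) / n) + 2 * m * √m := by
    rw [hD, expect_comm]
    have h1 : ∀ ψ : Fin m → V, 𝔼 φ : Fin m → V, cn (fun i j => U (φ i) (ψ j)) ≤
        m * (cn (fun v j => U v (ψ j)) / n) + 2 * m * √m := by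
      intro ψ
      have := row_sample (fun v j => U v (ψ j)) (fun v j => hU _ _) m hm0
      simpa using this
    refine le_trans (expect_le_expect fun ψ _ => h1 ψ) ?_
    rw [expect_add_distrib, Fintype.expect_const, ← mul_expect, ← expect_div]
    gcongr
    refine le_trans (expect_le_expect fun ψ _ => cn_transpose (fun j v => U v (ψ j))) ?_
    refine le_trans (row_sample (fun w v => U v w) (fun v j => hU _ _) m hm0) ?_
    rw [NS_univ]
    gcongr
    exact cn_transpose U
  have hperm : 𝔼 φ : Fin m → V, 𝔼 ψ : Fin m → V, 𝔼 π : Equiv.Perm V,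
      cn (fun i j => U (π (φ i)) (π (ψ j))) = D := by
    have e1 : ∀ φ : Fin m → V, 𝔼 ψ : Fin m → V, 𝔼 π : Equiv.Perm V,
      cn (fun i j => U (π (φ i)) (π (ψ j))) = 𝔼 π : Equiv.Perm V, 𝔼 ψ : Fin m → V,
      cn (fun i j => U (π (φ i)) (π (ψ j))) := fun φ => expect_comm _ _ _
    simp only [e1]
    rw [expect_comm]
    rw [← Fintype.expect_const (ι := Equiv.Perm V) D]
    refine expect_congr rfl fun π _ => ?_
    rw [hD]
    refine Fintype.expect_equiv (Equiv.arrowCongr (Equiv.refl _) π) _ _ fun φ => ?_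
    refine Fintype.expect_equiv (Equiv.arrowCongr (Equiv.refl _) π) _ _ fun ψ => ?_
    rfl
  have hdec : ((m:ℝ) ^ 2 - (m:ℝ) ^ 2 / n) * E ≤ ((k : ℝ) * (k - 1)) * D := by
    have h1 : 𝔼 φ : Fin m → V, 𝔼 ψ : Fin m → V,
        ((m : ℝ) ^ 2 - ∑ i, ∑ j, if φ i = ψ j then 1 else 0) * E ≤
        𝔼 φ : Fin m → V, 𝔼 ψ : Fin m → V, ((k : ℝ) * (k - 1)) *
          𝔼 π : Equiv.Perm V, cn (fun i j => U (π (φ i)) (π (ψ j))) :=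
      expect_le_expect fun φ _ => expect_le_expect fun ψ _ => decouple U h0 k m hm hkn hk φ ψ
    simp only [← mul_expect, ← expect_mul, expect_sub_distrib, Fintype.expect_const] at h1
    rw [coinc, hperm] at h1
    exact h1
  have hEle : E ≤ (k:ℝ) ^ 2 := by
    have hne : (powersetCard k (univ : Finset V)).Nonempty := by
      rw [powersetCard_nonempty, card_univ]; exact hkn
    refine expect_le hne fun S hS => ?_
    have := NS_le_sq U hU S
    rwa [(mem_powersetCard.1 hS).2] at this
  have hD0 : 0 ≤ D := expect_nonneg fun _ _ => expect_nonneg fun _ _ => cn_nonneg _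
  have h1 : (m:ℝ) ^ 2 * E ≤ (k:ℝ) ^ 2 * D + (m:ℝ) ^ 2 / n * (k:ℝ) ^ 2 := by
    have h2 : (m:ℝ) ^ 2 / n * E ≤ (m:ℝ) ^ 2 / n * (k:ℝ) ^ 2 := by gcongr
    nlinarith
  have h2 : E / (k:ℝ) ^ 2 ≤ D / (m:ℝ) ^ 2 + 1 / n := by
    rw [div_le_iff₀ (by positivity)]
    have h3 : (D / (m:ℝ) ^ 2 + 1 / n) * (k:ℝ) ^ 2 =
        ((k:ℝ) ^ 2 * D + (m:ℝ) ^ 2 / n * (k:ℝ) ^ 2) / (m:ℝ) ^ 2 := by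
      field_simp
    rw [h3, le_div_iff₀ (by positivity)]
    linarith
  refine h2.trans ?_
  gcongr
  rw [div_le_iff₀ (by positivity)]
  refine hDle.trans (le_of_eq ?_)
  have hs : √(m:ℝ) ^ 2 = m := Real.sq_sqrt hmpos.le
  have hs0 : 0 < √(m:ℝ) := Real.sqrt_pos.2 hmpos
  field_simp
  ring_nf
  rw [hs]

lemma cut_sub {V : Type} [Fintype V] (β β' : V → V → ℝ) (S : Finset V) :
    cutDistW (fun u v : {x // x ∈ S} => β u.1 v.1) (fun u v : {x // x ∈ S} => β' u.1 v.1) =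
      NS (fun u v => β u v - β' u v) S / (S.card : ℝ) ^ 2 := by
  unfold cutDistW
  rw [Fintype.card_coe]
  congr 1
  apply le_antisymm
  · refine ciSup_le fun p => ?_
    have h1 := le_NS (fun u v => β u v - β' u v) S (p.1.map (Function.Embedding.subtype _))
      (p.2.map (Function.Embedding.subtype _))
      (by intro x hx; rw [mem_map] at hx; obtain ⟨y, _, rfl⟩ := hx; exact y.2)
      (by intro x hx; rw [mem_map] at hx; obtain ⟨y, _, rfl⟩ := hx; exact y.2)
    simp only [sum_map] at h1
    exact h1
  · refine NS_le _ _ _ fun A B hA hB => ?_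
    have h1 := le_fsup (fun p : Finset {x // x ∈ S} × Finset {x // x ∈ S} =>
      |∑ s ∈ p.1, ∑ t ∈ p.2, (β s.1 t.1 - β' s.1 t.1)|) (A.subtype (· ∈ S), B.subtype (· ∈ S))
    refine le_trans (le_of_eq ?_) h1
    have hs : ∀ (C : Finset V) (_ : C ⊆ S) (F : V → ℝ),
        ∑ x ∈ C.subtype (· ∈ S), F x.1 = ∑ x ∈ C, F x := by
      intro C hC F
      rw [sum_subtype_eq_sum_filter, filter_true_of_mem fun x hx => hC hx]
    simp only
    rw [hs A hA (fun s => ∑ t ∈ B.subtype (· ∈ S), (β s t.1 - β' s t.1))]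
    congr 1
    refine sum_congr rfl fun s _ => ?_
    rw [hs B hB (fun t => β s t - β' s t)]

set_option maxHeartbeats 4000000 in
/-- First Sampling Lemma: for edge-weighted graphs `β, β'` on a common vertex set of size
at least `k`, a uniformly random `k`-subset `S` satisfies
`|d_□(G[S],H[S]) − d_□(G,H)| ≤ 10/k^{1/4}` with probability at least `1 − 2e^{−√k/8}`. -/
theorem first_sampling_lemma (k : ℕ) (hk : 0 < k) {V : Type} [Fintype V]
    (β β' : V → V → ℝ)
    (hβ : ∀ u v, β u v ∈ Set.Icc (0:ℝ) 1) (hβsymm : ∀ u v, β u v = β v u)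
    (hβ' : ∀ u v, β' u v ∈ Set.Icc (0:ℝ) 1) (hβ'symm : ∀ u v, β' u v = β' v u)
    (hcard : k ≤ Fintype.card V) :
    (1 - 2 * Real.exp (-(Real.sqrt k) / 8)) *
        ((Finset.powersetCard k (Finset.univ : Finset V)).card : ℝ) ≤
      (((Finset.powersetCard k (Finset.univ : Finset V)).filter (fun S : Finset V =>
          |cutDistW (fun u v : {x // x ∈ S} => β u.1 v.1)
              (fun u v : {x // x ∈ S} => β' u.1 v.1) -
            cutDistW β β'| ≤ 10 / (k : ℝ) ^ ((1 : ℝ)/4))).card : ℝ) := by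
  classical
  set U : V → V → ℝ := fun u v => β u v - β' u v with hUdef
  have hU : ∀ u v, |U u v| ≤ 1 := by
    intro u v
    obtain ⟨h1, h2⟩ := hβ u v
    obtain ⟨h3, h4⟩ := hβ' u v
    rw [abs_le]; constructor <;> simp only [U] <;> linarith
  set n := Fintype.card V with hn
  have hkR : (0:ℝ) < k := by exact_mod_cast hk
  have hnk : (k:ℝ) ≤ n := by exact_mod_cast hcard
  have hcut : cutDistW β β' = NS U univ / (n:ℝ) ^ 2 := by
    rw [NS_univ]; rfl
  set 𝒮 := powersetCard k (univ : Finset V) with h𝒮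
  have hne : 𝒮.Nonempty := by rw [h𝒮, powersetCard_nonempty, card_univ]; exact hcard
  set q : ℝ := (k : ℝ) ^ ((1:ℝ)/4) with hq
  have hqpos : 0 < q := Real.rpow_pos_of_pos hkR _
  have hq4 : q ^ 4 = k := by
    rw [hq, ← Real.rpow_natCast, ← Real.rpow_mul hkR.le]; norm_num
  have hq2 : √(k:ℝ) = q ^ 2 := by
    rw [← hq4, show q ^ 4 = (q ^ 2) ^ 2 by ring, Real.sqrt_sq (by positivity)]
  have hfilt : 𝒮.filter (fun S : Finset V =>
          |cutDistW (fun u v : {x // x ∈ S} => β u.1 v.1)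
              (fun u v : {x // x ∈ S} => β' u.1 v.1) -
            cutDistW β β'| ≤ 10 / q) =
      𝒮.filter (fun S => |NS U S / (k:ℝ) ^ 2 - NS U univ / (n:ℝ) ^ 2| ≤ 10 / q) := by
    refine filter_congr fun S hS => ?_
    rw [cut_sub, hcut, (mem_powersetCard.1 hS).2]
  rw [hfilt]
  have hexp0 := Real.exp_pos (-√(k:ℝ) / 8)
  have hcardpos : (0:ℝ) < 𝒮.card := by exact_mod_cast hne.card_pos
  have hNk : ∀ S ∈ 𝒮, 0 ≤ NS U S / (k:ℝ) ^ 2 ∧ NS U S / (k:ℝ) ^ 2 ≤ 1 := by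
    intro S hS
    refine ⟨div_nonneg (NS_nonneg _ _) (by positivity), ?_⟩
    rw [div_le_one (by positivity)]
    have := NS_le_sq U hU S
    rwa [(mem_powersetCard.1 hS).2] at this
  have hNn : 0 ≤ NS U univ / (n:ℝ) ^ 2 ∧ NS U univ / (n:ℝ) ^ 2 ≤ 1 := by
    refine ⟨div_nonneg (NS_nonneg _ _) (by positivity), ?_⟩
    rw [div_le_one (pow_pos (hkR.trans_le hnk) 2)]
    have := NS_le_sq U hU univ
    rwa [card_univ] at this
  by_cases hsmall : q ≤ 10
  · -- trivial case
    have : 𝒮.filter (fun S => |NS U S / (k:ℝ) ^ 2 - NS U univ / (n:ℝ) ^ 2| ≤ 10 / q) = 𝒮 := by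
      refine filter_true_of_mem fun S hS => ?_
      have h1 : 1 ≤ 10 / q := by rw [le_div_iff₀ hqpos]; linarith
      obtain ⟨h2, h3⟩ := hNk S hS
      obtain ⟨h4, h5⟩ := hNn
      rw [abs_le]; constructor <;> linarith
    rw [this]
    nlinarith
  have hq10 : 10 < q := lt_of_not_ge hsmall
  have hk2 : 2 ≤ k := by
    have : (2:ℝ) < k := by rw [← hq4]; nlinarith [sq_nonneg (q^2 - 100), sq_nonneg q]
    exact_mod_cast this.le
  set E := 𝔼 S ∈ 𝒮, NS U S / (k:ℝ) ^ 2 with hE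
  set U0 := offd U with hU0
  have hU0b : ∀ u v, |U0 u v| ≤ 1 := offd_bd U hU
  have hU0d : ∀ u, U0 u u = 0 := fun u => by simp [hU0, offd]
  have hk2R : (2:ℝ) ≤ k := by exact_mod_cast hk2
  have hnpos : (0:ℝ) < n := hkR.trans_le hnk
  have hinv : 1 / (n:ℝ) ≤ 1 / k := one_div_le_one_div_of_le hkR hnk
  have hE0 : |E - (𝔼 S ∈ 𝒮, NS U0 S) / (k:ℝ) ^ 2| ≤ 1 / k := by
    rw [hE, expect_div, ← expect_sub_distrib]
    refine (abs_expect_le _ _).trans (expect_le hne fun S hS => ?_)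
    rw [← sub_div, abs_div, abs_of_pos (show (0:ℝ) < (k:ℝ) ^ 2 by positivity),
      div_le_div_iff₀ (by positivity) hkR]
    have h1 := NS_le_offd U hU S
    have h2 := offd_NS_le U hU S
    rw [(mem_powersetCard.1 hS).2] at h1 h2
    have h3 : |NS U S - NS U0 S| ≤ k := by rw [abs_le]; constructor <;> linarith
    nlinarith
  have hV0 : |NS U univ / (n:ℝ) ^ 2 - NS U0 univ / (n:ℝ) ^ 2| ≤ 1 / n := by
    rw [← sub_div, abs_div, abs_of_pos (show (0:ℝ) < (n:ℝ) ^ 2 by positivity),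
      div_le_div_iff₀ (by positivity) hnpos]
    have h1 := NS_le_offd U hU univ
    have h2 := offd_NS_le U hU univ
    rw [card_univ] at h1 h2
    have h3 : |NS U univ - NS U0 univ| ≤ n := by rw [abs_le]; constructor <;> linarith
    nlinarith
  have hup : E ≤ NS U univ / (n:ℝ) ^ 2 + 8 / q ^ 2 + 3 / k := by
    have h1 := upper_avg U0 hU0d hU0b k (k/2) (by omega) (by omega) hcard
    have h2 : 4 / √((k/2 : ℕ) : ℝ) ≤ 8 / q ^ 2 := by
      have h3 : ((k:ℝ)) / 4 ≤ ((k/2 : ℕ) : ℝ) := by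
        rw [div_le_iff₀ (by norm_num)]
        have : k ≤ (k/2) * 4 := by omega
        exact_mod_cast this
      have h4 : q ^ 2 / 2 ≤ √((k/2 : ℕ) : ℝ) := by
        apply Real.le_sqrt_of_sq_le
        rw [div_pow, ← pow_mul, hq4]; norm_num; linarith
      rw [show 8 / q ^ 2 = 4 / (q ^ 2 / 2) by field_simp; norm_num]
      gcongr
    have h5 := (abs_le.1 hE0).2
    have h6 := (abs_le.1 hV0).1
    have h7 : 3 / (k:ℝ) = 1 / k + 1 / k + 1 / k := by ring
    linarith
  have hlo : NS U univ / (n:ℝ) ^ 2 - 3 / k ≤ E := by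
    have h1 := lower_avg U0 hU0d k hk2 hcard
    set E0 := 𝔼 S ∈ 𝒮, NS U0 S with hE0'
    have hX := NS_nonneg U0 univ
    have hXn := NS_le_sq U0 hU0b univ
    rw [card_univ] at hXn
    set X := NS U0 univ
    have h2 : X / (n:ℝ) ^ 2 - 1 / k ≤ E0 / (k:ℝ) ^ 2 := by
      have hE0nn : 0 ≤ E0 := expect_nonneg fun S _ => NS_nonneg _ _
      have h3 : ((k:ℝ) * (k - 1)) * X ≤ (n:ℝ) ^ 2 * E0 := by
        refine h1.trans ?_
        have : (n:ℝ) * (n - 1) ≤ (n:ℝ) ^ 2 := by nlinarith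
        exact mul_le_mul_of_nonneg_right this hE0nn
      have h4 : X / (n:ℝ) ^ 2 ≤ 1 := by rw [div_le_one (by positivity)]; exact hXn
      have h5 : ((k:ℝ) * (k - 1)) * (X / (n:ℝ) ^ 2) ≤ E0 := by
        rw [← mul_div_assoc, div_le_iff₀ (by positivity)]; linarith
      rw [le_div_iff₀ (by positivity)]
      have h6 : (X / (n:ℝ) ^ 2 - 1 / k) * (k:ℝ) ^ 2 =
          ((k:ℝ) * (k - 1)) * (X / (n:ℝ) ^ 2) + k * (X / (n:ℝ) ^ 2) - k := by
        field_simp; ring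
      rw [h6]
      nlinarith
    have h5 := (abs_le.1 hE0).1
    have h6 := (abs_le.1 hV0).2
    have h7 : 3 / (k:ℝ) = 1 / k + 1 / k + 1 / k := by ring
    linarith
  have herr : 8 / q ^ 2 + 3 / k ≤ 2 / q := by
    rw [← hq4]
    have h1 : 8 / q ^ 2 + 3 / q ^ 4 = (8 * q ^ 2 + 3) / q ^ 4 := by field_simp
    rw [h1, div_le_div_iff₀ (by positivity) hqpos]
    have : 8 * q ^ 2 + 3 ≤ 2 * q ^ 3 := by nlinarith [sq_nonneg q]
    nlinarith
  have herr3 : 0 ≤ 8 / q ^ 2 := by positivity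
  -- concentration
  have hconc : ∀ σ : ℝ, |σ| = 1 →
      ((𝒮.filter (fun S => σ * q ^ 3 * E + 8 * q ^ 2 < σ * q ^ 3 * (NS U S / (k:ℝ) ^ 2))).card : ℝ) ≤
        Real.exp (-√(k:ℝ) / 8) * 𝒮.card := by
    intro σ hσ
    have hm := mgf_bound (V := V) (2 / q) (by positivity) k univ
      (fun S => σ * q ^ 3 * (NS U S / (k:ℝ) ^ 2)) (by rw [card_univ]; exact hcard) (by
        intro T x y hT
        have h1 := NS_lip U hU T x y
        have hT' : (T.card : ℝ) + 1 ≤ k := by exact_mod_cast hT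
        rw [← mul_sub, ← sub_div, abs_mul, abs_mul, hσ, one_mul, abs_div,
          abs_of_pos (show 0 < q ^ 3 by positivity),
          abs_of_pos (show (0:ℝ) < (k:ℝ) ^ 2 by positivity)]
        have h2 : |NS U (insert x T) - NS U (insert y T)| ≤ 2 * q ^ 4 := by rw [hq4]; linarith
        rw [← hq4]
        calc q ^ 3 * (|NS U (insert x T) - NS U (insert y T)| / (q ^ 4) ^ 2)
            ≤ q ^ 3 * (2 * q ^ 4 / (q ^ 4) ^ 2) := by gcongr
          _ = 2 / q := by field_simp)
    rw [← mul_expect] at hm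
    have hmk := markov_exp 𝒮 _ _ _ (8 * q ^ 2) hne hm
    refine hmk.trans ?_
    gcongr
    rw [hq2, ← hq4]
    have : q ^ 4 * ((2 / q) ^ 2 / 2) = 2 * q ^ 2 := by field_simp
    rw [this]
    nlinarith [sq_nonneg q]
  have hc1 := hconc 1 (by simp)
  have hc2 := hconc (-1) (by simp)
  set F1 := 𝒮.filter (fun S => 1 * q ^ 3 * E + 8 * q ^ 2 < 1 * q ^ 3 * (NS U S / (k:ℝ) ^ 2)) with hF1
  set F2 := 𝒮.filter (fun S => -1 * q ^ 3 * E + 8 * q ^ 2 < -1 * q ^ 3 * (NS U S / (k:ℝ) ^ 2)) with hF2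
  set F := 𝒮.filter (fun S => |NS U S / (k:ℝ) ^ 2 - NS U univ / (n:ℝ) ^ 2| ≤ 10 / q) with hF
  have hcover : 𝒮 ⊆ F ∪ (F1 ∪ F2) := by
    intro S hS
    by_contra hcon
    simp only [mem_union, hF, hF1, hF2, mem_filter, hS, true_and, not_or, not_lt] at hcon
    obtain ⟨h1, h2, h3⟩ := hcon
    apply h1
    have hq3 : 0 < q ^ 3 := by positivity
    have h8 : q ^ 3 * (8 / q) = 8 * q ^ 2 := by field_simp
    have h4 : NS U S / (k:ℝ) ^ 2 - E ≤ 8 / q := by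
      refine le_of_mul_le_mul_left ?_ hq3
      rw [h8]; linarith
    have h5 : E - NS U S / (k:ℝ) ^ 2 ≤ 8 / q := by
      refine le_of_mul_le_mul_left ?_ hq3
      rw [h8]; linarith
    have h6 : 10 / q = 8 / q + 2 / q := by ring
    rw [abs_le]; constructor <;> linarith
  have hcc : (𝒮.card : ℝ) ≤ F.card + (F1.card + F2.card) := by
    have h1 := (card_le_card hcover).trans (card_union_le _ _)
    have h2 := card_union_le F1 F2
    exact_mod_cast h1.trans (by omega)
  linarith
end

section
/- Existence of the limit graphon: for every sequence (G_n) of finite simple graphs with |V(G_n)| → ∞ such that the sequence (t(F,G_n))_n converges for every finite simple graph F, there exists a graphon W such that t(F,G_n) → t(F,W) for every finite simple graph F. -/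
open MeasureTheory Set Filter

/-- The Lebesgue measure restricted to `[0,1]`. -/
noncomputable abbrev μ01 : MeasureTheory.Measure ℝ :=
  MeasureTheory.volume.restrict (Set.Icc (0:ℝ) 1)

/-- A graphon: a symmetric measurable function `[0,1]² → [0,1]`
(defined on all of `ℝ²` for convenience). -/
def IsGraphon (W : ℝ → ℝ → ℝ) : Prop :=
  Measurable (Function.uncurry W) ∧ (∀ x y, W x y = W y x) ∧ ∀ x y, W x y ∈ Set.Icc (0:ℝ) 1

-- The homomorphism density `t(F,W)` of a finite simple graph `F` in a graphon `W`.
open scoped Classical in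
noncomputable def homDensity {n : ℕ} (F : SimpleGraph (Fin n)) (W : ℝ → ℝ → ℝ) : ℝ :=
  ∫ x : Fin n → ℝ,
    (∏ p ∈ Finset.univ.filter (fun p : Fin n × Fin n => p.1 < p.2 ∧ F.Adj p.1 p.2),
      W (x p.1) (x p.2)) ∂(MeasureTheory.Measure.pi fun _ => μ01)

/-- The cut norm `‖U‖_□` of a kernel `U`. -/
noncomputable def cutNorm (U : ℝ → ℝ → ℝ) : ℝ :=
  sSup { r : ℝ | ∃ S T : Set ℝ, MeasurableSet S ∧ MeasurableSet T ∧
    S ⊆ Set.Icc (0:ℝ) 1 ∧ T ⊆ Set.Icc (0:ℝ) 1 ∧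
    r = |∫ x in S, ∫ y in T, U x y| }

/-- An invertible measure preserving map of `[0,1]` onto itself. -/
def IsInvMeasurePreserving (φ : ℝ → ℝ) : Prop :=
  Set.MapsTo φ (Set.Icc (0:ℝ) 1) (Set.Icc (0:ℝ) 1) ∧
  MeasureTheory.MeasurePreserving φ μ01 μ01 ∧
  ∃ ψ : ℝ → ℝ, Set.MapsTo ψ (Set.Icc (0:ℝ) 1) (Set.Icc (0:ℝ) 1) ∧
    MeasureTheory.MeasurePreserving ψ μ01 μ01 ∧
    (∀ x ∈ Set.Icc (0:ℝ) 1, ψ (φ x) = x) ∧ (∀ x ∈ Set.Icc (0:ℝ) 1, φ (ψ x) = x)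

/-- The cut distance `δ_□(U,W)` between two graphons. -/
noncomputable def cutDist (U W : ℝ → ℝ → ℝ) : ℝ :=
  sInf { r : ℝ | ∃ φ : ℝ → ℝ, IsInvMeasurePreserving φ ∧
    r = cutNorm (fun x y => U x y - W (φ x) (φ y)) }

-- The step-function graphon `W_G` associated with a finite simple graph `G` on `{0,…,n−1}`,
-- using the intervals `J_i = [i/n, (i+1)/n)`.
open scoped Classical in
noncomputable def graphonOf {n : ℕ} (G : SimpleGraph (Fin n)) : ℝ → ℝ → ℝ :=
  fun x y =>
    if ∃ i j : Fin n, G.Adj i j ∧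
        x ∈ Set.Ico (((i : ℕ) : ℝ) / n) ((((i : ℕ) : ℝ) + 1) / n) ∧
        y ∈ Set.Ico (((j : ℕ) : ℝ) / n) ((((j : ℕ) : ℝ) + 1) / n)
    then 1 else 0

-- The homomorphism density `t(F,G) = hom(F,G)/|V(G)|^{|V(F)|}` for finite simple graphs.
open scoped Classical in
noncomputable def homDensityFin {m n : ℕ} (F : SimpleGraph (Fin m)) (G : SimpleGraph (Fin n)) : ℝ :=
  (Fintype.card { f : Fin m → Fin n // ∀ i j, F.Adj i j → G.Adj (f i) (f j) } : ℝ) / (n : ℝ) ^ m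


lemma gl_abs_sum_le {V : Type*} [Fintype V] (w : V → ℝ) (δ : ℝ)
    (h : ∀ S : Finset V, |∑ u ∈ S, w u| ≤ δ) (a : V → ℝ) (ha : ∀ u, 0 ≤ a u ∧ a u ≤ 1) :
    |∑ u, w u * a u| ≤ δ := by
  classical
  rw [abs_le]
  constructor
  · have h1 := (abs_le.mp (h (Finset.univ.filter (fun u => w u < 0)))).1
    refine h1.trans ?_
    rw [Finset.sum_filter]
    apply Finset.sum_le_sum
    intro u _
    obtain ⟨h0, h1⟩ := ha u
    split_ifs with hw
    · nlinarith
    · exact mul_nonneg (not_lt.mp hw) h0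
  · have h1 := (abs_le.mp (h (Finset.univ.filter (fun u => 0 < w u)))).2
    refine le_trans ?_ h1
    rw [Finset.sum_filter]
    apply Finset.sum_le_sum
    intro u _
    obtain ⟨h0, h1⟩ := ha u
    split_ifs with hw
    · nlinarith
    · nlinarith [not_lt.mp hw]

lemma gl_cut_of_sets {V : Type*} [Fintype V] (U : V → V → ℝ) (δ : ℝ)
    (h : ∀ S T : Finset V, |∑ u ∈ S, ∑ v ∈ T, U u v| ≤ δ) (a b : V → ℝ)
    (ha : ∀ u, 0 ≤ a u ∧ a u ≤ 1) (hb : ∀ u, 0 ≤ b u ∧ b u ≤ 1) :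
    |∑ u, ∑ v, U u v * a u * b v| ≤ δ := by
  have : ∑ u, ∑ v, U u v * a u * b v = ∑ u, (∑ v, U u v * b v) * a u := by
    refine Finset.sum_congr rfl fun u _ => ?_
    rw [Finset.sum_mul]
    exact Finset.sum_congr rfl fun v _ => by ring
  rw [this]
  apply gl_abs_sum_le _ _ _ _ ha
  intro S
  have : ∑ u ∈ S, ∑ v, U u v * b v = ∑ v, (∑ u ∈ S, U u v) * b v := by
    rw [Finset.sum_comm]
    exact Finset.sum_congr rfl fun v _ => by rw [Finset.sum_mul]
  rw [this]
  apply gl_abs_sum_le _ _ _ _ hb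
  intro T
  rw [Finset.sum_comm]
  exact h S T

lemma gl_exists_max {V : Type*} [Fintype V] (U : V → V → ℝ) :
    ∃ P : Finset V × Finset V, ∀ S T : Finset V,
      |∑ u ∈ S, ∑ v ∈ T, U u v| ≤ |∑ u ∈ P.1, ∑ v ∈ P.2, U u v| := by
  obtain ⟨P, hP⟩ := Finite.exists_max
    (fun P : Finset V × Finset V => |∑ u ∈ P.1, ∑ v ∈ P.2, U u v|)
  exact ⟨P, fun S T => hP (S, T)⟩

lemma gl_regularity {V : Type*} [Fintype V] (A : V → V → ℝ) (hA : ∀ u v, 0 ≤ A u v ∧ A u v ≤ 1) :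
    ∃ code : ℕ → V → ℕ, (∀ k v, code k v < 4 ^ k) ∧ (∀ k v, code (k+1) v / 4 = code k v) ∧
      ∀ k : ℕ, 0 < k → ∃ f : ℕ → ℕ → ℝ, ∀ a b : V → ℝ, (∀ u, 0 ≤ a u ∧ a u ≤ 1) →
        (∀ u, 0 ≤ b u ∧ b u ≤ 1) →
        |∑ u, ∑ v, (A u v - f (code k u) (code k v)) * a u * b v|
          ≤ (Fintype.card V : ℝ) ^ 2 / √(k : ℝ) := by
  classical
  rcases isEmpty_or_nonempty V with hV | hV
  · refine ⟨fun _ _ => 0, fun k v => by positivity, fun k v => by simp, fun k hk => ⟨fun _ _ => 0, ?_⟩⟩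
    intro a b _ _
    simp
  choose mp hmp using (gl_exists_max (V := V))
  set n : ℝ := (Fintype.card V : ℝ) with hn
  have hn0 : 0 < n := by rw [hn]; exact_mod_cast Fintype.card_pos
  let cf : (V → V → ℝ) → ℝ := fun U => (∑ u ∈ (mp U).1, ∑ v ∈ (mp U).2, U u v) / n ^ 2
  let R : ℕ → V → V → ℝ := fun k => Nat.rec A (fun _ U => fun u v =>
    U u v - cf U * (if u ∈ (mp U).1 then 1 else 0) * (if v ∈ (mp U).2 then 1 else 0)) k
  have R0 : R 0 = A := rfl
  have Rs : ∀ k u v, R (k+1) u v = R k u v - cf (R k) * (if u ∈ (mp (R k)).1 then 1 else 0) *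
      (if v ∈ (mp (R k)).2 then 1 else 0) := fun k u v => rfl
  let code : ℕ → V → ℕ := fun k => Nat.rec (fun _ => 0) (fun j c => fun v =>
    4 * c v + (if v ∈ (mp (R j)).1 then 2 else 0) + (if v ∈ (mp (R j)).2 then 1 else 0)) k
  have cs : ∀ k v, code (k+1) v = 4 * code k v + (if v ∈ (mp (R k)).1 then 2 else 0) +
      (if v ∈ (mp (R k)).2 then 1 else 0) := fun k v => rfl
  have cdiv : ∀ k v, code (k+1) v / 4 = code k v := by
    intro k v
    rw [cs]
    split_ifs <;> omega
  have clt : ∀ k v, code k v < 4 ^ k := by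
    intro k v
    induction k with
    | zero => simp [code]
    | succ k ih =>
      rw [cs, pow_succ]
      split_ifs <;> omega
  -- energy
  have energy : ∀ k, ∑ u, ∑ v, (R (k+1) u v)^2 ≤ ∑ u, ∑ v, (R k u v)^2 - (cf (R k))^2 * n^2 := by
    intro k
    set c := cf (R k) with hc
    set S := (mp (R k)).1
    set T := (mp (R k)).2
    have e1 : ∀ u v, (R (k+1) u v)^2 = (R k u v)^2
        - 2 * c * ((if u ∈ S then (if v ∈ T then R k u v else 0) else 0))
        + c^2 * ((if u ∈ S then 1 else 0) * (if v ∈ T then 1 else 0)) := by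
      intro u v
      rw [Rs]
      split_ifs <;> ring
    simp_rw [e1, Finset.sum_add_distrib, Finset.sum_sub_distrib, ← Finset.mul_sum]
    have e2 : ∑ u, ∑ v, (if u ∈ S then (if v ∈ T then R k u v else 0) else 0) = c * n^2 := by
      have : c * n^2 = ∑ u ∈ S, ∑ v ∈ T, R k u v := by
        rw [hc]; simp only [cf]; field_simp; rfl
      have h4 : ∀ u, ∑ v, (if u ∈ S then (if v ∈ T then R k u v else 0) else 0) =
          if u ∈ S then ∑ v ∈ T, R k u v else 0 := by
        intro u
        split_ifs <;> simp
      simp_rw [this, h4]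
      simp
    have e3 : (∑ u : V, (if u ∈ S then (1:ℝ) else 0) * ∑ v : V, (if v ∈ T then (1:ℝ) else 0)) ≤ n^2 := by
      rw [← Finset.sum_mul, sq]
      have : ∀ S : Finset V, (∑ u : V, (if u ∈ S then (1:ℝ) else 0)) ≤ n := by
        intro S
        simp [hn]
        exact_mod_cast Finset.card_le_univ S
      apply mul_le_mul (this S) (this T) (Finset.sum_nonneg fun _ _ => by split_ifs <;> norm_num) hn0.le
    rw [e2]
    nlinarith [mul_le_mul_of_nonneg_left e3 (sq_nonneg c)]
  have energy2 : ∀ k, ∑ u, ∑ v, (R k u v)^2 ≤ n^2 - (∑ j ∈ Finset.range k, (cf (R j))^2) * n^2 := by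
    intro k
    induction k with
    | zero =>
      simp only [R0, Finset.range_zero, Finset.sum_empty, zero_mul, sub_zero]
      calc ∑ u, ∑ v, (A u v)^2 ≤ ∑ u : V, ∑ v : V, (1:ℝ) := by
            gcongr with u _ v _
            obtain ⟨h0, h1⟩ := hA u v
            nlinarith
        _ = n^2 := by simp [hn, sq]
    | succ k ih =>
      rw [Finset.sum_range_succ]
      linarith [energy k]
  have small : ∀ k : ℕ, 0 < k → ∃ j < k, |cf (R j)| ≤ 1 / √(k:ℝ) := by
    intro k hk
    by_contra! hcon
    have hk' : (0:ℝ) < k := by exact_mod_cast hk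
    have h1 : ∀ j ∈ Finset.range k, 1 / (k:ℝ) < (cf (R j))^2 := by
      intro j hj
      have := hcon j (Finset.mem_range.mp hj)
      rw [← sq_abs (cf (R j))]
      calc 1 / (k:ℝ) = (1 / √(k:ℝ))^2 := by rw [div_pow, Real.sq_sqrt hk'.le]; simp
        _ < _ := by gcongr
    have h2 := Finset.sum_lt_sum_of_nonempty (by simpa using hk.ne') h1
    simp at h2
    rw [mul_inv_cancel₀ hk'.ne'] at h2
    have h3 := energy2 k
    have h4 : 0 ≤ ∑ u, ∑ v, (R k u v)^2 := Finset.sum_nonneg fun _ _ => Finset.sum_nonneg fun _ _ => sq_nonneg _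
    nlinarith [sq_pos_of_pos hn0]
  have fac : ∀ j, ∃ f : ℕ → ℕ → ℝ, ∀ u v, A u v - f (code j u) (code j v) = R j u v := by
    intro j
    induction j with
    | zero => exact ⟨fun _ _ => 0, fun u v => by simp [R0]⟩
    | succ j ih =>
      obtain ⟨f, hf⟩ := ih
      refine ⟨fun p q => f (p/4) (q/4) + cf (R j) * (if 2 ≤ p % 4 then 1 else 0) *
        (if q % 2 = 1 then 1 else 0), fun u v => ?_⟩
      have g1 : (2 ≤ code (j+1) u % 4) ↔ u ∈ (mp (R j)).1 := by
        rw [cs]; split_ifs with h1 h2 h3 <;> simp [h1] <;> omega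
      have g2 : (code (j+1) v % 2 = 1) ↔ v ∈ (mp (R j)).2 := by
        rw [cs]; split_ifs with h1 h2 h3 <;> simp [*] <;> omega
      simp only [cdiv, g1, g2, Rs, ← hf]
      ring
  have fac2 : ∀ j k, j ≤ k → ∃ f : ℕ → ℕ → ℝ, ∀ u v, A u v - f (code k u) (code k v) = R j u v := by
    intro j k hjk
    induction k, hjk using Nat.le_induction with
    | base => exact fac j
    | succ k _ ih =>
      obtain ⟨f, hf⟩ := ih
      exact ⟨fun p q => f (p/4) (q/4), fun u v => by simp only [cdiv, hf]⟩
  refine ⟨code, clt, cdiv, fun k hk => ?_⟩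
  obtain ⟨j, hj, hjs⟩ := small k hk
  obtain ⟨f, hf⟩ := fac2 j k hj.le
  refine ⟨f, fun a b ha hb => ?_⟩
  simp_rw [hf]
  apply gl_cut_of_sets _ _ _ _ _ ha hb
  intro S T
  refine (hmp (R j) S T).trans ?_
  have : ∑ u ∈ (mp (R j)).1, ∑ v ∈ (mp (R j)).2, R j u v = cf (R j) * n^2 := by
    simp only [cf]; field_simp
  rw [this, abs_mul, abs_of_nonneg (sq_nonneg n)]
  calc _ ≤ 1 / √(k:ℝ) * n^2 := by gcongr
    _ = _ := by ring

lemma gl_sum_update {m : ℕ} {V : Type*} [Fintype V] (g : (Fin m → V) → ℝ) (i : Fin m) :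
    (Fintype.card V : ℝ) * ∑ x, g x = ∑ x, ∑ u, g (Function.update x i u) := by
  classical
  have h1 : ∑ x : Fin m → V, ∑ u, g (Function.update x i u)
      = ∑ p : (Fin m → V) × V, g (Function.update p.1 i p.2) := by
    rw [Fintype.sum_prod_type]
  have h2 : (Fintype.card V : ℝ) * ∑ x, g x = ∑ p : (Fin m → V) × V, g p.1 := by
    rw [Fintype.sum_prod_type]
    simp [Finset.mul_sum]
  rw [h1, h2]
  symm
  refine Fintype.sum_bijective (fun p : (Fin m → V) × V => (Function.update p.1 i p.2, p.1 i))
    (Function.Involutive.bijective ?_) _ _ (fun p => rfl)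
  rintro ⟨x, u⟩
  simp

lemma gl_single {m : ℕ} {V : Type*} [Fintype V] (U : V → V → ℝ) (δ : ℝ)
    (hU : ∀ a b : V → ℝ, (∀ u, 0 ≤ a u ∧ a u ≤ 1) → (∀ u, 0 ≤ b u ∧ b u ≤ 1) →
      |∑ u, ∑ v, U u v * a u * b v| ≤ δ * (Fintype.card V : ℝ) ^ 2)
    (K : Fin m × Fin m → V → V → ℝ) (hK : ∀ e u v, 0 ≤ K e u v ∧ K e u v ≤ 1)
    (D : Finset (Fin m × Fin m)) (hD : ∀ e ∈ D, e.1 < e.2) (e : Fin m × Fin m) (he : e.1 < e.2)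
    (heD : e ∉ D) :
    |∑ x : Fin m → V, U (x e.1) (x e.2) * ∏ d ∈ D, K d (x d.1) (x d.2)|
      ≤ δ * (Fintype.card V : ℝ) ^ m := by
  classical
  obtain ⟨i, j⟩ := e
  simp only at he
  rcases isEmpty_or_nonempty V with hV | hV
  · have : IsEmpty (Fin m → V) := ⟨fun x => hV.elim (x i)⟩
    have hm : m ≠ 0 := by rintro rfl; exact i.elim0
    simp [hm]
  set n : ℝ := (Fintype.card V : ℝ) with hn
  have hn0 : 0 < n := by rw [hn]; exact_mod_cast Fintype.card_pos
  set g : (Fin m → V) → ℝ := fun x => U (x i) (x j) * ∏ d ∈ D, K d (x d.1) (x d.2) with hg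
  have h1 : n * (n * ∑ x, g x) =
      ∑ x, ∑ u, ∑ v, g (Function.update (Function.update x i u) j v) := by
    rw [gl_sum_update g j, gl_sum_update _ i]
  have hij : i ≠ j := he.ne
  have h2 : ∀ x : Fin m → V,
      |∑ u, ∑ v, g (Function.update (Function.update x i u) j v)| ≤ δ * n^2 := by
    intro x
    have := hU
      (fun u => ∏ d ∈ D with ¬ (d.1 = j ∨ d.2 = j), K d (Function.update x i u d.1) (Function.update x i u d.2))
      (fun v => ∏ d ∈ D with (d.1 = j ∨ d.2 = j), K d (Function.update x j v d.1) (Function.update x j v d.2))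
      (fun u => ⟨Finset.prod_nonneg fun d _ => (hK _ _ _).1,
        Finset.prod_le_one (fun d _ => (hK _ _ _).1) (fun d _ => (hK _ _ _).2)⟩)
      (fun u => ⟨Finset.prod_nonneg fun d _ => (hK _ _ _).1,
        Finset.prod_le_one (fun d _ => (hK _ _ _).1) (fun d _ => (hK _ _ _).2)⟩)
    refine le_of_eq_of_le ?_ this
    congr 1
    refine Finset.sum_congr rfl fun u _ => Finset.sum_congr rfl fun v _ => ?_
    simp only [hg]
    rw [← Finset.prod_filter_mul_prod_filter_not D (fun d => d.1 = j ∨ d.2 = j)]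
    have a1 : ∏ d ∈ D with (d.1 = j ∨ d.2 = j),
        K d (Function.update (Function.update x i u) j v d.1) (Function.update (Function.update x i u) j v d.2)
        = ∏ d ∈ D with (d.1 = j ∨ d.2 = j), K d (Function.update x j v d.1) (Function.update x j v d.2) := by
      refine Finset.prod_congr rfl fun d hd => ?_
      rw [Finset.mem_filter] at hd
      obtain ⟨hd, hj⟩ := hd
      have hlt := hD d hd
      have d1 : d.1 ≠ i := by
        intro h
        rcases hj with hj | hj
        · exact hij (h.symm.trans hj)
        · exact heD (by rw [← h, ← hj]; exact hd)
      have d2 : d.2 ≠ i := by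
        intro h
        rcases hj with hj | hj
        · rw [h, hj] at hlt; exact absurd hlt (not_lt.mpr he.le)
        · exact hij (h.symm.trans hj)
      rw [Function.update_comm hij, Function.update_of_ne d1, Function.update_of_ne d2]
    have a2 : ∏ d ∈ D with ¬ (d.1 = j ∨ d.2 = j),
        K d (Function.update (Function.update x i u) j v d.1) (Function.update (Function.update x i u) j v d.2)
        = ∏ d ∈ D with ¬ (d.1 = j ∨ d.2 = j), K d (Function.update x i u d.1) (Function.update x i u d.2) := by
      refine Finset.prod_congr rfl fun d hd => ?_
      rw [Finset.mem_filter, not_or] at hd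
      rw [Function.update_of_ne hd.2.1, Function.update_of_ne hd.2.2]
    rw [a1, a2]
    rw [Function.update_self, Function.update_of_ne hij, Function.update_self]
    ring
  have h3 : |n * (n * ∑ x, g x)| ≤ n^m * (δ * n^2) := by
    rw [h1]
    refine (Finset.abs_sum_le_sum_abs _ _).trans ((Finset.sum_le_sum fun x _ => h2 x).trans ?_)
    simp [hn]
  rw [abs_mul, abs_mul, abs_of_pos hn0] at h3
  have : n^2 * |∑ x, g x| ≤ n^2 * (δ * n^m) := by nlinarith
  exact le_of_mul_le_mul_left this (by positivity)

lemma gl_counting {m : ℕ} {V : Type*} [Fintype V] (A B : V → V → ℝ) (δ : ℝ)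
    (hA : ∀ u v, 0 ≤ A u v ∧ A u v ≤ 1) (hB : ∀ u v, 0 ≤ B u v ∧ B u v ≤ 1)
    (hU : ∀ a b : V → ℝ, (∀ u, 0 ≤ a u ∧ a u ≤ 1) → (∀ u, 0 ≤ b u ∧ b u ≤ 1) →
      |∑ u, ∑ v, (A u v - B u v) * a u * b v| ≤ δ * (Fintype.card V : ℝ) ^ 2)
    (E : Finset (Fin m × Fin m)) (hE : ∀ e ∈ E, e.1 < e.2) :
    |∑ x : Fin m → V, (∏ d ∈ E, A (x d.1) (x d.2)) - ∑ x : Fin m → V, ∏ d ∈ E, B (x d.1) (x d.2)|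
      ≤ E.card * δ * (Fintype.card V : ℝ) ^ m := by
  classical
  have key : ∀ E : Finset (Fin m × Fin m), (∀ e ∈ E, e.1 < e.2) →
      ∀ D : Finset (Fin m × Fin m), (∀ e ∈ D, e.1 < e.2) → Disjoint E D →
      |∑ x : Fin m → V, ((∏ d ∈ E, A (x d.1) (x d.2)) - ∏ d ∈ E, B (x d.1) (x d.2)) *
        ∏ d ∈ D, B (x d.1) (x d.2)| ≤ E.card * δ * (Fintype.card V : ℝ) ^ m := by
    intro E
    induction E using Finset.induction_on with
    | empty => intro _ D _ _; simp
    | insert e E heE ih =>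
      intro hE D hD hdis
      rw [Finset.disjoint_insert_left] at hdis
      have hE' : ∀ e ∈ E, e.1 < e.2 := fun d hd => hE d (Finset.mem_insert_of_mem hd)
      have he := hE e (Finset.mem_insert_self _ _)
      have i1 := ih hE' (insert e D) (by
        intro d hd
        rcases Finset.mem_insert.mp hd with rfl | hd
        · exact he
        · exact hD d hd) (by
        rw [Finset.disjoint_insert_right]; exact ⟨heE, hdis.2⟩)
      have i2 := gl_single (fun u v => A u v - B u v) δ hU (fun d => if d ∈ E then A else B)
        (by intro d u v; split_ifs; exacts [hA u v, hB u v]) (E ∪ D)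
        (by intro d hd
            rcases Finset.mem_union.mp hd with hd | hd
            exacts [hE' d hd, hD d hd]) e he
        (by rw [Finset.mem_union, not_or]; exact ⟨heE, hdis.1⟩)
      have e1 : ∑ x : Fin m → V, ((∏ d ∈ insert e E, A (x d.1) (x d.2)) - ∏ d ∈ insert e E, B (x d.1) (x d.2)) *
        ∏ d ∈ D, B (x d.1) (x d.2) =
        (∑ x : Fin m → V, (A (x e.1) (x e.2) - B (x e.1) (x e.2)) *
          ∏ d ∈ E ∪ D, (if d ∈ E then A else B) (x d.1) (x d.2)) +
        ∑ x : Fin m → V, ((∏ d ∈ E, A (x d.1) (x d.2)) - ∏ d ∈ E, B (x d.1) (x d.2)) *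
        ∏ d ∈ insert e D, B (x d.1) (x d.2) := by
        rw [← Finset.sum_add_distrib]
        refine Finset.sum_congr rfl fun x _ => ?_
        have : ∏ d ∈ E ∪ D, (if d ∈ E then A else B) (x d.1) (x d.2) =
          (∏ d ∈ E, A (x d.1) (x d.2)) * ∏ d ∈ D, B (x d.1) (x d.2) := by
          rw [Finset.prod_union hdis.2]
          congr 1
          · exact Finset.prod_congr rfl fun d hd => by rw [if_pos hd]
          · exact Finset.prod_congr rfl fun d hd => by
              rw [if_neg (Finset.disjoint_right.mp hdis.2 hd)]
        rw [this, Finset.prod_insert heE, Finset.prod_insert heE, Finset.prod_insert hdis.1]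
        ring
      rw [e1, Finset.card_insert_of_notMem heE]
      refine (abs_add_le _ _).trans ?_
      push_cast
      linarith
  have := key E hE ∅ (by simp) (by simp)
  simpa [Finset.sum_sub_distrib] using this

lemma gl_average {V : Type*} [Fintype V] (κ : V → ℕ) (a : V → ℝ) (ha : ∀ u, 0 ≤ a u ∧ a u ≤ 1) :
    ∃ θ : ℕ → ℝ, (∀ p, 0 ≤ θ p ∧ θ p ≤ 1) ∧
      ∀ g : ℕ → ℝ, ∑ u, g (κ u) * a u = ∑ u, g (κ u) * θ (κ u) := by
  classical
  refine ⟨fun p => (∑ u with κ u = p, a u) / ((Finset.univ.filter (fun u => κ u = p)).card : ℝ), ?_, ?_⟩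
  · intro p
    constructor
    · exact div_nonneg (Finset.sum_nonneg fun u _ => (ha u).1) (by positivity)
    · apply div_le_one_of_le₀ _ (by positivity)
      calc _ ≤ ∑ u with κ u = p, (1:ℝ) := Finset.sum_le_sum fun u _ => (ha u).2
        _ = _ := by simp
  · intro g
    rw [← Finset.sum_fiberwise_of_maps_to (t := Finset.univ.image κ) (g := κ) (fun u _ => Finset.mem_image_of_mem _ (Finset.mem_univ u)),
      ← Finset.sum_fiberwise_of_maps_to (t := Finset.univ.image κ) (g := κ) (s := Finset.univ) (fun u _ => Finset.mem_image_of_mem _ (Finset.mem_univ u))]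
    refine Finset.sum_congr rfl fun p hp => ?_
    have e1 : ∑ u with κ u = p, g (κ u) * a u = g p * ∑ u with κ u = p, a u := by
      rw [Finset.mul_sum]
      exact Finset.sum_congr rfl fun u hu => by rw [(Finset.mem_filter.mp hu).2]
    rw [e1]
    have e2 : ∑ w with κ w = p, g (κ w) * ((∑ u with κ u = κ w, a u) /
        ((Finset.univ.filter (fun u => κ u = κ w)).card : ℝ)) =
        ∑ w with κ w = p, g p * ((∑ u with κ u = p, a u) /
        ((Finset.univ.filter (fun u => κ u = p)).card : ℝ)) :=
      Finset.sum_congr rfl (fun u hu => by rw [(Finset.mem_filter.mp hu).2])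
    rw [e2]
    have : ((Finset.univ.filter (fun u => κ u = p)).card : ℝ) ≠ 0 := by
      obtain ⟨u, _, hu⟩ := Finset.mem_image.mp hp
      exact_mod_cast (Finset.card_pos.mpr ⟨u, by simp [hu]⟩).ne'
    rw [Finset.sum_const, nsmul_eq_mul]
    field_simp

/-- Cut distance to a step function. -/
lemma gl_cut_step {V : Type*} [Fintype V] (A : V → V → ℝ) (κ : V → ℕ) (K : ℕ) (hκ : ∀ v, κ v < K)
    (f h : ℕ → ℕ → ℝ) (δ : ℝ)
    (hf : ∀ a b : V → ℝ, (∀ u, 0 ≤ a u ∧ a u ≤ 1) → (∀ u, 0 ≤ b u ∧ b u ≤ 1) →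
      |∑ u, ∑ v, (A u v - f (κ u) (κ v)) * a u * b v| ≤ δ)
    (a b : V → ℝ) (ha : ∀ u, 0 ≤ a u ∧ a u ≤ 1) (hb : ∀ u, 0 ≤ b u ∧ b u ≤ 1) :
    |∑ u, ∑ v, (A u v - h (κ u) (κ v)) * a u * b v| ≤ 2 * δ +
      ∑ p ∈ Finset.range K, ∑ q ∈ Finset.range K,
        |∑ u, ∑ v, (if κ u = p then 1 else 0) * (if κ v = q then 1 else 0) * (A u v - h p q)| := by
  classical
  obtain ⟨θ, hθ, hθ'⟩ := gl_average κ a ha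
  obtain ⟨τ, hτ, hτ'⟩ := gl_average κ b hb
  have s1 : ∑ u, ∑ v, (f (κ u) (κ v) - h (κ u) (κ v)) * a u * b v =
      ∑ u, ∑ v, (f (κ u) (κ v) - h (κ u) (κ v)) * θ (κ u) * τ (κ v) := by
    have t1 : ∀ u, ∑ v, (f (κ u) (κ v) - h (κ u) (κ v)) * a u * b v =
        (∑ v, (f (κ u) (κ v) - h (κ u) (κ v)) * τ (κ v)) * a u := by
      intro u
      rw [← hτ' (fun q => f (κ u) q - h (κ u) q), Finset.sum_mul]
      exact Finset.sum_congr rfl fun v _ => by ring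
    simp_rw [t1]
    rw [hθ' (fun p => ∑ v, (f p (κ v) - h p (κ v)) * τ (κ v))]
    refine Finset.sum_congr rfl fun u _ => ?_
    rw [Finset.sum_mul]
    exact Finset.sum_congr rfl fun v _ => by ring
  have s2 : ∑ u, ∑ v, (A u v - h (κ u) (κ v)) * θ (κ u) * τ (κ v) =
      ∑ p ∈ Finset.range K, ∑ q ∈ Finset.range K, θ p * τ q *
        ∑ u, ∑ v, (if κ u = p then 1 else 0) * (if κ v = q then 1 else 0) * (A u v - h p q) := by
    simp_rw [Finset.mul_sum]
    have c1 : ∀ p, ∑ q ∈ Finset.range K, ∑ u, ∑ v, θ p * τ q * ((if κ u = p then 1 else 0) * (if κ v = q then 1 else 0) * (A u v - h p q))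
      = ∑ u, ∑ v, ∑ q ∈ Finset.range K, θ p * τ q * ((if κ u = p then 1 else 0) * (if κ v = q then 1 else 0) * (A u v - h p q)) := by
      intro p
      rw [Finset.sum_comm]
      exact Finset.sum_congr rfl fun u _ => Finset.sum_comm
    simp_rw [c1]
    symm
    rw [Finset.sum_comm]
    refine Finset.sum_congr rfl fun u _ => ?_
    rw [Finset.sum_comm]
    refine Finset.sum_congr rfl fun v _ => ?_
    rw [Finset.sum_eq_single (κ u), Finset.sum_eq_single (κ v)]
    · simp; ring
    · intro q _ hq; simp [hq.symm]
    · intro hq; exact absurd (Finset.mem_range.mpr (hκ v)) hq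
    · intro p _ hp; simp [hp.symm]
    · intro hq; exact absurd (Finset.mem_range.mpr (hκ u)) hq
  have s3 : ∑ u, ∑ v, (A u v - h (κ u) (κ v)) * a u * b v =
      ∑ u, ∑ v, (A u v - f (κ u) (κ v)) * a u * b v
      - ∑ u, ∑ v, (A u v - f (κ u) (κ v)) * θ (κ u) * τ (κ v)
      + ∑ u, ∑ v, (A u v - h (κ u) (κ v)) * θ (κ u) * τ (κ v) := by
    have : ∑ u, ∑ v, (A u v - h (κ u) (κ v)) * a u * b v =
      ∑ u, ∑ v, (A u v - f (κ u) (κ v)) * a u * b v + ∑ u, ∑ v, (f (κ u) (κ v) - h (κ u) (κ v)) * a u * b v := by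
      simp_rw [← Finset.sum_add_distrib]
      exact Finset.sum_congr rfl fun u _ => Finset.sum_congr rfl fun v _ => by ring
    rw [this, s1]
    simp_rw [← Finset.sum_sub_distrib, ← Finset.sum_add_distrib]
    exact Finset.sum_congr rfl fun u _ => Finset.sum_congr rfl fun v _ => by ring
  have b1 := hf a b ha hb
  have b2 := hf (fun u => θ (κ u)) (fun u => τ (κ u)) (fun u => hθ _) (fun u => hτ _)
  have b3 : |∑ u, ∑ v, (A u v - h (κ u) (κ v)) * θ (κ u) * τ (κ v)| ≤
      ∑ p ∈ Finset.range K, ∑ q ∈ Finset.range K,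
        |∑ u, ∑ v, (if κ u = p then 1 else 0) * (if κ v = q then 1 else 0) * (A u v - h p q)| := by
    rw [s2]
    refine (Finset.abs_sum_le_sum_abs _ _).trans (Finset.sum_le_sum fun p _ => ?_)
    refine (Finset.abs_sum_le_sum_abs _ _).trans (Finset.sum_le_sum fun q _ => ?_)
    rw [abs_mul, abs_mul, abs_of_nonneg (hθ p).1, abs_of_nonneg (hτ q).1]
    apply mul_le_of_le_one_left (abs_nonneg _)
    exact mul_le_one₀ (hθ p).2 (hτ q).1 (hτ q).2
  rw [s3]
  refine (abs_add_le _ _).trans ?_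
  have := abs_sub (∑ u, ∑ v, (A u v - f (κ u) (κ v)) * a u * b v)
    (∑ u, ∑ v, (A u v - f (κ u) (κ v)) * θ (κ u) * τ (κ v))
  linarith

instance gl_prob : IsProbabilityMeasure μ01 := ⟨by simp⟩

lemma gl_sum_four (K : ℕ) (g : ℕ → ℝ) :
    ∑ p ∈ Finset.range (K * 4), g p = ∑ p ∈ Finset.range K, ∑ d ∈ Finset.range 4, g (4 * p + d) := by
  induction K with
  | zero => simp
  | succ K ih =>
    rw [Nat.succ_mul, Finset.sum_range_add, ih, Finset.sum_range_succ _ K, mul_comm K 4]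

lemma gl_code (M : ℕ → ℕ → ℝ) (hM0 : ∀ k p, 0 ≤ M k p)
    (hM1 : ∀ k, ∑ p ∈ Finset.range (4 ^ k), M k p = 1)
    (hM : ∀ k p, M k p = ∑ d ∈ Finset.range 4, M (k+1) (4 * p + d)) :
    ∃ code : ℕ → ℝ → ℕ, (∀ k, Measurable (code k)) ∧ (∀ k x, code k x < 4 ^ k) ∧
      (∀ k x, code (k+1) x / 4 = code k x) ∧
      ∀ k p, p < 4 ^ k → μ01.real (code k ⁻¹' {p}) = M k p := by
  classical
  let c : ℕ → ℕ → ℝ := fun k p => ∑ q ∈ Finset.range p, M k q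
  have c0 : ∀ k, c k 0 = 0 := fun k => by simp [c]
  have c1 : ∀ k, c k (4^k) = 1 := hM1
  have cs : ∀ k p, c k (p+1) = c k p + M k p := fun k p => by simp [c, Finset.sum_range_succ]
  have cm : ∀ k, Monotone (c k) := fun k => monotone_nat_of_le_succ fun p => by
    rw [cs]; linarith [hM0 k p]
  have c4 : ∀ k p, c (k+1) (4*p) = c k p := by
    intro k p
    simp only [c]
    rw [mul_comm, gl_sum_four]
    exact Finset.sum_congr rfl fun q _ => (hM k q).symm
  have ex : ∀ k x, ∃ p, p < 4^k ∧ (x ∈ Ico (0:ℝ) 1 → c k p ≤ x ∧ x < c k (p+1)) ∧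
      (x ∉ Ico (0:ℝ) 1 → p = 0) := by
    intro k x
    by_cases hx : x ∈ Ico (0:ℝ) 1
    · have hex : ∃ p, x < c k (p+1) := ⟨4^k, by
        refine hx.2.trans_le ?_
        rw [← c1 k]
        exact cm k (Nat.le_succ _)⟩
      have hspec := Nat.find_spec hex
      have hle : c k (Nat.find hex) ≤ x := by
        rcases Nat.eq_zero_or_pos (Nat.find hex) with h | h
        · rw [h, c0]; exact hx.1
        · have := Nat.find_min hex (Nat.sub_lt h one_pos)
          rw [show Nat.find hex - 1 + 1 = Nat.find hex by omega] at this
          exact not_lt.mp this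
      refine ⟨Nat.find hex, ?_, fun _ => ⟨hle, hspec⟩, fun h => absurd hx h⟩
      by_contra hcon
      have := cm k (not_lt.mp hcon)
      rw [c1] at this
      linarith [hx.2]
    · exact ⟨0, by positivity, fun h => absurd h hx, fun _ => rfl⟩
  choose code clt cin cout using ex
  have uniq : ∀ k x p, x ∈ Ico (0:ℝ) 1 → c k p ≤ x → x < c k (p+1) → code k x = p := by
    intro k x p hx h1 h2
    obtain ⟨h3, h4⟩ := cin k x hx
    rcases lt_trichotomy (code k x) p with h | h | h
    · have := cm k (Nat.succ_le_of_lt h)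
      simp only [Nat.succ_eq_add_one] at this
      linarith
    · exact h
    · have := cm k (Nat.succ_le_of_lt h)
      simp only [Nat.succ_eq_add_one] at this
      linarith
  have pre : ∀ k p, code k ⁻¹' {p} ∩ Ico (0:ℝ) 1 = Ico (c k p) (c k (p+1)) ∩ Ico (0:ℝ) 1 := by
    intro k p
    ext x
    simp only [mem_inter_iff, mem_preimage, mem_singleton_iff]
    constructor
    · rintro ⟨rfl, hx⟩
      exact ⟨cin k x hx, hx⟩
    · rintro ⟨h, hx⟩
      exact ⟨uniq k x p hx h.1 h.2, hx⟩
  refine ⟨code, fun k => ?_, clt, ?_, ?_⟩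
  · refine measurable_to_countable' fun p => ?_
    have : code k ⁻¹' {p} = (code k ⁻¹' {p} ∩ Ico (0:ℝ) 1) ∪ (if p = 0 then (Ico (0:ℝ) 1)ᶜ else ∅) := by
      ext x
      by_cases hx : x ∈ Ico (0:ℝ) 1
      · split_ifs <;> simp [hx]
      · have hc := cout k x hx
        split_ifs with h
        · simp [hx, hc, h]
        · simp only [mem_preimage, mem_singleton_iff, hc, mem_union, mem_inter_iff, hx, and_false,
            mem_empty_iff_false, or_self, iff_false]
          exact fun h' => h h'.symm
    rw [this, pre]
    refine (measurableSet_Ico.inter measurableSet_Ico).union ?_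
    split_ifs
    · exact measurableSet_Ico.compl
    · exact MeasurableSet.empty
  · intro k x
    by_cases hx : x ∈ Ico (0:ℝ) 1
    · symm
      obtain ⟨h3, h4⟩ := cin (k+1) x hx
      apply uniq k x _ hx
      · rw [← c4]
        exact (cm (k+1) (by omega)).trans h3
      · rw [← c4]
        exact h4.trans_le (cm (k+1) (by omega))
    · rw [cout _ x hx, cout _ x hx]
  · intro k p hp
    have h1 : μ01.real (code k ⁻¹' {p}) = (volume.restrict (Ico (0:ℝ) 1)).real (code k ⁻¹' {p}) := by
      unfold μ01
      rw [restrict_Ico_eq_restrict_Icc]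
    have h2 : Ico (c k p) (c k (p+1)) ⊆ Ico (0:ℝ) 1 := by
      apply Ico_subset_Ico
      · rw [← c0 k]; exact cm k (Nat.zero_le _)
      · rw [← c1 k]; exact cm k hp
    rw [h1, measureReal_restrict_apply' measurableSet_Ico, pre, inter_eq_left.mpr h2,
      Real.volume_real_Ico_of_le (cm k (Nat.le_succ p)), cs]
    ring

lemma gl_expand {m : ℕ} (K : ℕ) (Φ : (Fin m → ℕ) → ℝ) (y : Fin m → ℕ) (hy : ∀ i, y i < K) :
    Φ y = ∑ P ∈ Fintype.piFinset (fun _ : Fin m => Finset.range K),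
      Φ P * ∏ i, (if y i = P i then (1:ℝ) else 0) := by
  rw [Finset.sum_eq_single y]
  · simp
  · intro P _ hP
    have : ∃ i, y i ≠ P i := by
      by_contra! h
      exact hP (funext fun i => (h i).symm)
    obtain ⟨i, hi⟩ := this
    rw [Finset.prod_eq_zero (Finset.mem_univ i) (by simp [hi]), mul_zero]
  · intro h
    exact absurd (by simpa using hy) h

lemma gl_ind_int (κ : ℝ → ℕ) (hκ : Measurable κ) (p : ℕ) :
    ∫ x, (if κ x = p then (1:ℝ) else 0) ∂μ01 = μ01.real (κ ⁻¹' {p}) := by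
  have : (fun x => if κ x = p then (1:ℝ) else 0) = (κ ⁻¹' {p}).indicator 1 := by
    funext x
    by_cases hx : κ x = p <;> simp [hx]
  rw [this, integral_indicator_one (hκ (measurableSet_singleton p))]

lemma gl_int_pi {m : ℕ} (K : ℕ) (κ : ℝ → ℕ) (hκ : Measurable κ) (hK : ∀ x, κ x < K)
    (Φ : (Fin m → ℕ) → ℝ) :
    ∫ x : Fin m → ℝ, Φ (fun i => κ (x i)) ∂(Measure.pi fun _ => μ01) =
      ∑ P ∈ Fintype.piFinset (fun _ : Fin m => Finset.range K),
        Φ P * ∏ i, μ01.real (κ ⁻¹' {P i}) := by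
  have h1 : ∀ x : Fin m → ℝ, Φ (fun i => κ (x i)) =
    ∑ P ∈ Fintype.piFinset (fun _ : Fin m => Finset.range K),
      Φ P * ∏ i, (if κ (x i) = P i then (1:ℝ) else 0) :=
    fun x => gl_expand K Φ _ (fun i => hK (x i))
  simp_rw [h1]
  rw [integral_finsetSum]
  · refine Finset.sum_congr rfl fun P _ => ?_
    rw [integral_const_mul, integral_fintype_prod_eq_prod (fun i x => if κ x = P i then (1:ℝ) else 0)]
    simp_rw [gl_ind_int κ hκ]
  · intro P _
    refine Integrable.const_mul ?_ _
    apply Integrable.fintype_prod (f := fun i x => if κ x = P i then (1:ℝ) else 0)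
    intro i
    refine Integrable.of_bound (C := 1) ?_ (ae_of_all _ fun x => by split_ifs <;> simp)
    exact (Measurable.ite (hκ (measurableSet_singleton _)) measurable_const measurable_const).aestronglyMeasurable

lemma gl_int_prod (K : ℕ) (κ : ℝ → ℕ) (hκ : Measurable κ) (hK : ∀ x, κ x < K)
    (Ψ : ℕ → ℕ → ℝ) :
    ∫ z : ℝ × ℝ, Ψ (κ z.1) (κ z.2) ∂(μ01.prod μ01) =
      ∑ p ∈ Finset.range K, ∑ q ∈ Finset.range K,
        Ψ p q * (μ01.real (κ ⁻¹' {p}) * μ01.real (κ ⁻¹' {q})) := by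
  have h1 : ∀ z : ℝ × ℝ, Ψ (κ z.1) (κ z.2) =
    ∑ p ∈ Finset.range K, ∑ q ∈ Finset.range K,
      Ψ p q * ((if κ z.1 = p then (1:ℝ) else 0) * (if κ z.2 = q then (1:ℝ) else 0)) := by
    intro z
    rw [Finset.sum_eq_single (κ z.1), Finset.sum_eq_single (κ z.2)]
    · simp
    · intro q _ hq; simp [hq.symm]
    · intro h; exact absurd (Finset.mem_range.mpr (hK _)) h
    · intro q _ hq; simp [hq.symm]
    · intro h; exact absurd (Finset.mem_range.mpr (hK _)) h
  have hintg : ∀ p, Integrable (fun x => if κ x = p then (1:ℝ) else 0) μ01 := by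
    intro p
    refine Integrable.of_bound (C := 1) ?_ (ae_of_all _ fun x => by split_ifs <;> simp)
    exact (Measurable.ite (hκ (measurableSet_singleton _)) measurable_const measurable_const).aestronglyMeasurable
  have hint2 : ∀ p q, Integrable (fun z : ℝ × ℝ => Ψ p q * ((if κ z.1 = p then (1:ℝ) else 0) * (if κ z.2 = q then (1:ℝ) else 0))) (μ01.prod μ01) :=
    fun p q => ((hintg p).mul_prod (hintg q)).const_mul _
  simp_rw [h1]
  rw [integral_finsetSum _ fun p _ => integrable_finsetSum _ fun q _ => hint2 p q]
  refine Finset.sum_congr rfl fun p _ => ?_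
  rw [integral_finsetSum _ fun q _ => hint2 p q]
  refine Finset.sum_congr rfl fun q _ => ?_
  rw [integral_const_mul, integral_prod_mul (fun x => if κ x = p then (1:ℝ) else 0) (fun x => if κ x = q then (1:ℝ) else 0), gl_ind_int κ hκ, gl_ind_int κ hκ]

lemma gl_graphon (code : ℕ → ℝ → ℕ) (cmeas : ∀ k, Measurable (code k))
    (clt : ∀ k x, code k x < 4 ^ k) (cdiv : ∀ k x, code (k+1) x / 4 = code k x)
    (M : ℕ → ℕ → ℝ) (hcM : ∀ k p, p < 4 ^ k → μ01.real (code k ⁻¹' {p}) = M k p)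
    (ν h : ℕ → ℕ → ℕ → ℝ)
    (hν : ∀ k p q, ν k p q = ∑ d ∈ Finset.range 4, ∑ e ∈ Finset.range 4, ν (k+1) (4 * p + d) (4 * q + e))
    (hh : ∀ k p q, h k p q * (M k p * M k q) = ν k p q)
    (h01 : ∀ k p q, 0 ≤ h k p q ∧ h k p q ≤ 1) (hsymm : ∀ k p q, h k p q = h k q p) :
    ∃ W : ℝ → ℝ → ℝ, IsGraphon W ∧
      ∀ᵐ z ∂(μ01.prod μ01), Tendsto (fun k => h k (code k z.1) (code k z.2)) atTop (nhds (W z.1 z.2)) := by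
  let H : ℕ → ℝ × ℝ → ℝ := fun k z => h k (code k z.1) (code k z.2)
  let γ : ℕ → ℝ × ℝ → ℕ × ℕ := fun k z => (code k z.1, code k z.2)
  have γm : ∀ k, Measurable (γ k) := fun k =>
    ((cmeas k).comp measurable_fst).prodMk ((cmeas k).comp measurable_snd)
  let ℱ : Filtration ℕ (inferInstance : MeasurableSpace (ℝ × ℝ)) :=
    { seq := fun k => MeasurableSpace.comap (γ k) ⊤
      mono' := by
        apply monotone_nat_of_le_succ
        intro k
        have : γ k = (fun p : ℕ × ℕ => (p.1 / 4, p.2 / 4)) ∘ γ (k+1) := by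
          funext z
          exact Prod.ext (cdiv k z.1).symm (cdiv k z.2).symm
        rw [this, ← MeasurableSpace.comap_comp]
        exact MeasurableSpace.comap_mono le_top
      le' := fun k => by
        rintro s ⟨t, _, rfl⟩
        exact γm k MeasurableSet.of_discrete }
  have Hm : ∀ k, Measurable (H k) := fun k =>
    (Measurable.of_discrete (f := fun p : ℕ × ℕ => h k p.1 p.2)).comp (γm k)
  have Hb : ∀ k z, ‖H k z‖ ≤ 1 := fun k z => by
    rw [Real.norm_eq_abs, abs_of_nonneg (h01 _ _ _).1]; exact (h01 _ _ _).2
  have Hint : ∀ k, Integrable (H k) (μ01.prod μ01) := fun k =>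
    Integrable.of_bound (Hm k).aestronglyMeasurable 1 (ae_of_all _ (Hb k))
  have Hsm : ∀ k, StronglyMeasurable[ℱ k] (H k) := by
    intro k
    apply Measurable.stronglyMeasurable
    have h1 : Measurable[ℱ k, ⊤] (γ k) := Measurable.of_comap_le le_rfl
    exact (measurable_from_top (f := fun p : ℕ × ℕ => h k p.1 p.2)).comp h1
  have Hset : ∀ k (t : Set (ℕ × ℕ)), ∫ z in γ k ⁻¹' t, H k z ∂(μ01.prod μ01) =
      ∫ z in γ k ⁻¹' t, H (k+1) z ∂(μ01.prod μ01) := by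
    classical
    intro k t
    have ms : MeasurableSet (γ k ⁻¹' t) := γm k MeasurableSet.of_discrete
    rw [← integral_indicator ms, ← integral_indicator ms]
    have e1 : (γ k ⁻¹' t).indicator (H k) =
        fun z => (fun p q => if (p, q) ∈ t then h k p q else 0) (code k z.1) (code k z.2) := by
      ext z; simp [Set.indicator_apply, γ, H]
    have e2 : (γ k ⁻¹' t).indicator (H (k+1)) =
        fun z => (fun p q => if (p/4, q/4) ∈ t then h (k+1) p q else 0) (code (k+1) z.1) (code (k+1) z.2) := by
      ext z; simp [Set.indicator_apply, γ, H, cdiv]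
    rw [e1, e2]
    refine (gl_int_prod (4^k) _ (cmeas k) (clt k)
      (fun p q => if (p, q) ∈ t then h k p q else 0)).trans
      (Eq.trans ?_ (gl_int_prod (4^(k+1)) _ (cmeas (k+1)) (clt (k+1))
      (fun p q => if (p/4, q/4) ∈ t then h (k+1) p q else 0)).symm)
    have f1 : ∑ p ∈ Finset.range (4^k), ∑ q ∈ Finset.range (4^k),
        (if (p, q) ∈ t then h k p q else 0) * (μ01.real (code k ⁻¹' {p}) * μ01.real (code k ⁻¹' {q}))
        = ∑ p ∈ Finset.range (4^k), ∑ q ∈ Finset.range (4^k), (if (p, q) ∈ t then ν k p q else 0) := by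
      refine Finset.sum_congr rfl fun p hp => Finset.sum_congr rfl fun q hq => ?_
      rw [hcM k p (Finset.mem_range.mp hp), hcM k q (Finset.mem_range.mp hq), ← hh]
      split_ifs <;> simp
    have f2 : ∑ p ∈ Finset.range (4^(k+1)), ∑ q ∈ Finset.range (4^(k+1)),
        (if (p/4, q/4) ∈ t then h (k+1) p q else 0) * (μ01.real (code (k+1) ⁻¹' {p}) * μ01.real (code (k+1) ⁻¹' {q}))
        = ∑ p ∈ Finset.range (4^(k+1)), ∑ q ∈ Finset.range (4^(k+1)), (if (p/4, q/4) ∈ t then ν (k+1) p q else 0) := by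
      refine Finset.sum_congr rfl fun p hp => Finset.sum_congr rfl fun q hq => ?_
      rw [hcM (k+1) p (Finset.mem_range.mp hp), hcM (k+1) q (Finset.mem_range.mp hq), ← hh]
      split_ifs <;> simp
    rw [f1, f2]
    simp_rw [pow_succ, gl_sum_four]
    refine Finset.sum_congr rfl fun p _ => ?_
    rw [Finset.sum_comm]
    refine Finset.sum_congr rfl fun q _ => ?_
    rw [hν]
    have g1 : ∀ d ∈ Finset.range 4, ∀ e ∈ Finset.range 4,
        (if ((4 * p + d)/4, (4 * q + e)/4) ∈ t then ν (k+1) (4*p+d) (4*q+e) else 0)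
        = if (p, q) ∈ t then ν (k+1) (4*p+d) (4*q+e) else 0 := by
      intro d hd e he
      rw [Finset.mem_range] at hd he
      have a1 : (4*p+d)/4 = p := by omega
      have a2 : (4*q+e)/4 = q := by omega
      rw [a1, a2]
    rw [Finset.sum_congr rfl fun d hd => Finset.sum_congr rfl fun e he => g1 d hd e he]
    split_ifs <;> simp
  have mart : Martingale H ℱ (μ01.prod μ01) := by
    refine martingale_nat Hsm Hint fun k => ?_
    refine ae_eq_condExp_of_forall_setIntegral_eq (ℱ.le k) (Hint (k+1))
      (fun s _ _ => (Hint k).integrableOn) ?_ (Hsm k).aestronglyMeasurable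
    rintro s ⟨t, _, rfl⟩ _
    exact Hset k t
  have conv := mart.submartingale.exists_ae_tendsto_of_bdd (R := 1) (by
    intro k
    have := eLpNorm_le_of_ae_bound (p := 1) (ae_of_all (μ01.prod μ01) (Hb k))
    simpa using this)
  refine ⟨fun x y => limsup (fun k => H k (x, y)) atTop, ⟨?_, ?_, ?_⟩, ?_⟩
  · exact Measurable.limsup Hm
  · intro x y
    simp only [H]
    simp_rw [hsymm _ (code _ x) (code _ y)]
  · intro x y
    have b1 : IsBoundedUnder (· ≤ ·) atTop (fun k => H k (x, y)) := isBoundedUnder_of ⟨1, fun k => (h01 _ _ _).2⟩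
    have b2 : IsBoundedUnder (· ≥ ·) atTop (fun k => H k (x, y)) := isBoundedUnder_of ⟨0, fun k => (h01 _ _ _).1⟩
    constructor
    · exact le_limsup_of_frequently_le (Frequently.of_forall fun k => (h01 _ _ _).1) b1
    · exact limsup_le_of_le b2.isCoboundedUnder_le (Eventually.of_forall fun k => (h01 _ _ _).2)
  · filter_upwards [conv] with z hz
    obtain ⟨c, hc⟩ := hz
    have : limsup (fun k => H k (z.1, z.2)) atTop = c := hc.limsup_eq
    rw [this]
    exact hc

lemma gl_density_tendsto (code : ℕ → ℝ → ℕ) (cmeas : ∀ k, Measurable (code k))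
    (h : ℕ → ℕ → ℕ → ℝ) (h01 : ∀ k p q, 0 ≤ h k p q ∧ h k p q ≤ 1)
    (W : ℝ → ℝ → ℝ)
    (hW : ∀ᵐ z ∂(μ01.prod μ01), Tendsto (fun k => h k (code k z.1) (code k z.2)) atTop (nhds (W z.1 z.2)))
    {m : ℕ} (E : Finset (Fin m × Fin m)) (hE : ∀ e ∈ E, e.1 < e.2) :
    Tendsto (fun k => ∫ x : Fin m → ℝ, (∏ e ∈ E, h k (code k (x e.1)) (code k (x e.2)))
        ∂(Measure.pi fun _ => μ01)) atTop
      (nhds (∫ x : Fin m → ℝ, (∏ e ∈ E, W (x e.1) (x e.2)) ∂(Measure.pi fun _ => μ01))) := by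
  have ev : ∀ e ∈ E, ∀ᵐ x ∂(Measure.pi fun _ : Fin m => μ01),
      Tendsto (fun k => h k (code k (x e.1)) (code k (x e.2))) atTop (nhds (W (x e.1) (x e.2))) := by
    intro e he
    have mp : MeasurePreserving (fun x : Fin m → ℝ => (x e.1, x e.2)) (Measure.pi fun _ : Fin m => μ01)
        (μ01.prod μ01) := by
      refine ⟨(measurable_pi_apply _).prodMk (measurable_pi_apply _), ?_⟩
      have ind := (ProbabilityTheory.iIndepFun_pi (μ := fun _ : Fin m => μ01)
        (X := fun _ x => x) (fun _ => aemeasurable_id)).indepFun (hE e he).ne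
      rw [ProbabilityTheory.indepFun_iff_map_prod_eq_prod_map_map
        (measurable_pi_apply _).aemeasurable (measurable_pi_apply _).aemeasurable] at ind
      rw [ind, (measurePreserving_eval (fun _ : Fin m => μ01) e.1).map_eq,
        (measurePreserving_eval (fun _ : Fin m => μ01) e.2).map_eq]
    exact mp.quasiMeasurePreserving.ae hW
  apply tendsto_integral_of_dominated_convergence (fun _ => (1:ℝ))
  · intro k
    apply Measurable.aestronglyMeasurable
    refine Finset.measurable_prod _ fun e _ => ?_
    exact (Measurable.of_discrete (f := fun p : ℕ × ℕ => h k p.1 p.2)).comp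
      (((cmeas k).comp (measurable_pi_apply e.1)).prodMk ((cmeas k).comp (measurable_pi_apply e.2)))
  · exact integrable_const _
  · intro k
    refine ae_of_all _ fun x => ?_
    rw [Real.norm_eq_abs, abs_of_nonneg (Finset.prod_nonneg fun e _ => (h01 _ _ _).1)]
    exact Finset.prod_le_one (fun e _ => (h01 _ _ _).1) fun e _ => (h01 _ _ _).2
  · have : ∀ᵐ x ∂(Measure.pi fun _ : Fin m => μ01), ∀ e ∈ E,
      Tendsto (fun k => h k (code k (x e.1)) (code k (x e.2))) atTop (nhds (W (x e.1) (x e.2))) := by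
      rw [← Finset.eventually_all] at *
      exact ev
    filter_upwards [this] with x hx
    exact tendsto_finsetProd _ hx

lemma gl_ultra_lim (𝒰 : Ultrafilter ℕ) (f : ℕ → ℝ) (hf : ∀ n, 0 ≤ f n ∧ f n ≤ 1) :
    ∃ l : ℝ, Tendsto f 𝒰 (nhds l) := by
  obtain ⟨l, _, hl⟩ := (isCompact_Icc (a := (0:ℝ)) (b := 1)).ultrafilter_le_nhds (𝒰.map f) (by
    rw [Ultrafilter.coe_map, le_principal_iff, mem_map]
    exact univ_mem' fun n => hf n)
  exact ⟨l, hl⟩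

open scoped Classical in
lemma gl_homDensityFin {m n : ℕ} (F : SimpleGraph (Fin m)) (G : SimpleGraph (Fin n)) :
    homDensityFin F G = (∑ x : Fin m → Fin n,
      ∏ p ∈ Finset.univ.filter (fun p : Fin m × Fin m => p.1 < p.2 ∧ F.Adj p.1 p.2),
        (if G.Adj (x p.1) (x p.2) then (1:ℝ) else 0)) / (n:ℝ)^m := by
  unfold homDensityFin
  congr 1
  rw [Fintype.card_subtype, Finset.card_filter]
  push_cast
  refine Finset.sum_congr rfl fun x _ => ?_
  rw [Finset.prod_ite_zero]
  simp only [Finset.prod_const_one]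
  refine if_congr ?_ rfl rfl
  constructor
  · intro h p hp
    exact h _ _ (Finset.mem_filter.mp hp).2.2
  · intro h i j hij
    rcases lt_trichotomy i j with hlt | heq | hgt
    · exact h (i, j) (by simp [hlt, hij])
    · exact absurd heq hij.ne
    · exact (h (j, i) (by simp [hgt, hij.symm])).symm

lemma gl_ind_four (a b p : ℕ) (hab : a / 4 = b) :
    (if b = p then (1:ℝ) else 0) = ∑ d ∈ Finset.range 4, if a = 4 * p + d then (1:ℝ) else 0 := by
  by_cases h : b = p
  · rw [if_pos h, Finset.sum_eq_single (a % 4)]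
    · rw [if_pos (by omega)]
    · intro d hd hne
      rw [Finset.mem_range] at hd
      rw [if_neg (by omega)]
    · intro h'
      exact absurd (Finset.mem_range.mpr (by omega)) h'
  · rw [if_neg h]
    symm
    apply Finset.sum_eq_zero
    intro d hd
    rw [Finset.mem_range] at hd
    rw [if_neg (by omega)]

/-- Empirical mass of a label. -/
noncomputable def glMu {n : ℕ} (κ : Fin n → ℕ) (p : ℕ) : ℝ :=
  (∑ u, if κ u = p then (1:ℝ) else 0) / n

/-- Empirical edge mass between two labels. -/
noncomputable def glNu {n : ℕ} (A : Fin n → Fin n → ℝ) (κ : Fin n → ℕ) (p q : ℕ) : ℝ :=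
  (∑ u, ∑ v, (if κ u = p then (1:ℝ) else 0) * (if κ v = q then (1:ℝ) else 0) * A u v) / (n:ℝ)^2

lemma glMu_nonneg {n : ℕ} (κ : Fin n → ℕ) (p : ℕ) : 0 ≤ glMu κ p :=
  div_nonneg (Finset.sum_nonneg fun u _ => by split_ifs <;> norm_num) (by positivity)

lemma glMu_le_one {n : ℕ} (κ : Fin n → ℕ) (p : ℕ) : glMu κ p ≤ 1 := by
  apply div_le_one_of_le₀ _ (by positivity)
  calc _ ≤ ∑ u : Fin n, (1:ℝ) := Finset.sum_le_sum fun u _ => by split_ifs <;> norm_num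
    _ = n := by simp

lemma glMu_sum {n : ℕ} (hn : n ≠ 0) (κ : Fin n → ℕ) (K : ℕ) (hκ : ∀ u, κ u < K) :
    ∑ p ∈ Finset.range K, glMu κ p = 1 := by
  unfold glMu
  rw [← Finset.sum_div, Finset.sum_comm]
  have : ∀ u, ∑ p ∈ Finset.range K, (if κ u = p then (1:ℝ) else 0) = 1 := by
    intro u
    simp [hκ u]
  simp [hκ, hn]

lemma glMu_four {n : ℕ} (κ κ' : Fin n → ℕ) (h : ∀ u, κ' u / 4 = κ u) (p : ℕ) :
    glMu κ p = ∑ d ∈ Finset.range 4, glMu κ' (4 * p + d) := by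
  unfold glMu
  rw [← Finset.sum_div, Finset.sum_comm]
  simp_rw [fun u => gl_ind_four _ _ p (h u)]

lemma glNu_nonneg {n : ℕ} (A : Fin n → Fin n → ℝ) (hA : ∀ u v, 0 ≤ A u v ∧ A u v ≤ 1)
    (κ : Fin n → ℕ) (p q : ℕ) : 0 ≤ glNu A κ p q :=
  div_nonneg (Finset.sum_nonneg fun u _ => Finset.sum_nonneg fun v _ =>
    mul_nonneg (by split_ifs <;> norm_num) (hA u v).1) (by positivity)

lemma glNu_le {n : ℕ} (A : Fin n → Fin n → ℝ) (hA : ∀ u v, 0 ≤ A u v ∧ A u v ≤ 1)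
    (κ : Fin n → ℕ) (p q : ℕ) : glNu A κ p q ≤ glMu κ p * glMu κ q := by
  unfold glNu glMu
  rw [div_mul_div_comm, ← sq, Finset.sum_mul_sum]
  refine div_le_div_of_nonneg_right (Finset.sum_le_sum fun u _ =>
    Finset.sum_le_sum fun v _ => ?_) (by positivity)
  have h0 := (hA u v).1
  have h1 := (hA u v).2
  split_ifs <;> simp_all

lemma glNu_symm {n : ℕ} (A : Fin n → Fin n → ℝ) (hA : ∀ u v, A u v = A v u)
    (κ : Fin n → ℕ) (p q : ℕ) : glNu A κ p q = glNu A κ q p := by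
  unfold glNu
  rw [Finset.sum_comm]
  congr 1
  refine Finset.sum_congr rfl fun u _ => Finset.sum_congr rfl fun v _ => ?_
  rw [hA u v]
  ring

lemma glNu_four {n : ℕ} (A : Fin n → Fin n → ℝ) (κ κ' : Fin n → ℕ) (h : ∀ u, κ' u / 4 = κ u)
    (p q : ℕ) : glNu A κ p q =
      ∑ d ∈ Finset.range 4, ∑ e ∈ Finset.range 4, glNu A κ' (4 * p + d) (4 * q + e) := by
  unfold glNu
  simp_rw [← Finset.sum_div]
  congr 1
  have e1 : ∀ d, ∑ e ∈ Finset.range 4, ∑ u, ∑ v, (if κ' u = 4 * p + d then (1:ℝ) else 0) *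
      (if κ' v = 4 * q + e then (1:ℝ) else 0) * A u v =
      ∑ u, ∑ v, (if κ' u = 4 * p + d then (1:ℝ) else 0) * (if κ v = q then (1:ℝ) else 0) * A u v := by
    intro d
    rw [Finset.sum_comm]
    refine Finset.sum_congr rfl fun u _ => ?_
    rw [Finset.sum_comm]
    refine Finset.sum_congr rfl fun v _ => ?_
    rw [gl_ind_four _ _ q (h v), Finset.mul_sum, Finset.sum_mul]
  simp_rw [e1]
  symm
  rw [Finset.sum_comm]
  refine Finset.sum_congr rfl fun u _ => ?_
  rw [Finset.sum_comm]
  refine Finset.sum_congr rfl fun v _ => ?_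
  rw [gl_ind_four _ _ p (h u), Finset.sum_mul, Finset.sum_mul]

lemma gl_sum_pi {m n : ℕ} (K : ℕ) (κ : Fin n → ℕ) (hK : ∀ x, κ x < K) (Φ : (Fin m → ℕ) → ℝ) :
    (∑ x : Fin m → Fin n, Φ (fun i => κ (x i))) / (n:ℝ)^m =
      ∑ P ∈ Fintype.piFinset (fun _ : Fin m => Finset.range K), Φ P * ∏ i, glMu κ (P i) := by
  have h1 : ∀ x : Fin m → Fin n, Φ (fun i => κ (x i)) =
    ∑ P ∈ Fintype.piFinset (fun _ : Fin m => Finset.range K),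
      Φ P * ∏ i, (if κ (x i) = P i then (1:ℝ) else 0) :=
    fun x => gl_expand K Φ _ (fun i => hK (x i))
  simp_rw [h1]
  rw [Finset.sum_comm, Finset.sum_div]
  refine Finset.sum_congr rfl fun P _ => ?_
  unfold glMu
  rw [Finset.prod_div_distrib, Finset.prod_univ_sum, Fintype.piFinset_univ, ← Finset.mul_sum]
  simp [mul_div_assoc]

/-- Existence of the limit graphon: if all homomorphism densities of a graph sequence with
`|V(G_n)| → ∞` converge, then there is a graphon `W` with `t(F,G_n) → t(F,W)` for all `F`. -/
theorem limit_graphon_exists (N : ℕ → ℕ) (G : ∀ i, SimpleGraph (Fin (N i)))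
    (hN : Filter.Tendsto N Filter.atTop Filter.atTop)
    (hconv : ∀ (m : ℕ) (F : SimpleGraph (Fin m)), ∃ L : ℝ,
      Filter.Tendsto (fun i => homDensityFin F (G i)) Filter.atTop (nhds L)) :
    ∃ W : ℝ → ℝ → ℝ, IsGraphon W ∧ ∀ (m : ℕ) (F : SimpleGraph (Fin m)),
      Filter.Tendsto (fun i => homDensityFin F (G i)) Filter.atTop (nhds (homDensity F W)) := by
  classical
  let A : ∀ i, Fin (N i) → Fin (N i) → ℝ := fun i u v => if (G i).Adj u v then 1 else 0
  have hA : ∀ i u v, 0 ≤ A i u v ∧ A i u v ≤ 1 := by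
    intro i u v
    simp only [A]
    split_ifs <;> norm_num
  have hAs : ∀ i u v, A i u v = A i v u := by
    intro i u v
    simp only [A, (G i).adj_comm u v]
  choose κ κlt κdiv κreg using fun i => gl_regularity (A i) (hA i)
  let 𝒰 : Ultrafilter ℕ := Ultrafilter.of atTop
  have h𝒰 : (𝒰 : Filter ℕ) ≤ atTop := Ultrafilter.of_le atTop
  choose M hM using fun k p => gl_ultra_lim 𝒰 (fun i => glMu (κ i k) p)
    (fun i => ⟨glMu_nonneg _ _, glMu_le_one _ _⟩)
  choose ν hν using fun k p q => gl_ultra_lim 𝒰 (fun i => glNu (A i) (κ i k) p q)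
    (fun i => ⟨glNu_nonneg _ (hA i) _ _ _, (glNu_le _ (hA i) _ _ _).trans
      (mul_le_one₀ (glMu_le_one _ _) (glMu_nonneg _ _) (glMu_le_one _ _))⟩)
  have Npos : ∀ᶠ i in (𝒰 : Filter ℕ), N i ≠ 0 :=
    h𝒰 ((hN.eventually_ge_atTop 1).mono fun i hi => by omega)
  have M0 : ∀ k p, 0 ≤ M k p := fun k p =>
    ge_of_tendsto (hM k p) (Eventually.of_forall fun i => glMu_nonneg _ _)
  have M1 : ∀ k, ∑ p ∈ Finset.range (4^k), M k p = 1 := by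
    intro k
    have t1 := tendsto_finsetSum (Finset.range (4^k)) (fun p _ => hM k p)
    have t2 : Tendsto (fun i => ∑ p ∈ Finset.range (4^k), glMu (κ i k) p) 𝒰 (nhds 1) := by
      apply tendsto_const_nhds.congr'
      filter_upwards [Npos] with i hi
      exact (glMu_sum hi _ _ (κlt i k)).symm
    exact tendsto_nhds_unique t1 t2
  have M4 : ∀ k p, M k p = ∑ d ∈ Finset.range 4, M (k+1) (4 * p + d) := by
    intro k p
    have t1 := tendsto_finsetSum (Finset.range 4) (fun d _ => hM (k+1) (4 * p + d))
    refine tendsto_nhds_unique (hM k p) (t1.congr fun i => ?_)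
    exact (glMu_four _ _ (κdiv i k) p).symm
  have ν0 : ∀ k p q, 0 ≤ ν k p q := fun k p q =>
    ge_of_tendsto (hν k p q) (Eventually.of_forall fun i => glNu_nonneg _ (hA i) _ _ _)
  have νle : ∀ k p q, ν k p q ≤ M k p * M k q := fun k p q =>
    le_of_tendsto_of_tendsto' (hν k p q) ((hM k p).mul (hM k q)) fun i => glNu_le _ (hA i) _ _ _
  have νs : ∀ k p q, ν k p q = ν k q p := fun k p q =>
    tendsto_nhds_unique (hν k p q) ((hν k q p).congr fun i => glNu_symm _ (hAs i) _ _ _)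
  have ν4 : ∀ k p q, ν k p q = ∑ d ∈ Finset.range 4, ∑ e ∈ Finset.range 4,
      ν (k+1) (4 * p + d) (4 * q + e) := by
    intro k p q
    have t1 := tendsto_finsetSum (Finset.range 4) (fun d _ =>
      tendsto_finsetSum (Finset.range 4) (fun e _ => hν (k+1) (4 * p + d) (4 * q + e)))
    refine tendsto_nhds_unique (hν k p q) (t1.congr fun i => ?_)
    exact (glNu_four _ _ _ (κdiv i k) p q).symm
  let h : ℕ → ℕ → ℕ → ℝ := fun k p q => ν k p q / (M k p * M k q)
  have hh : ∀ k p q, h k p q * (M k p * M k q) = ν k p q := by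
    intro k p q
    simp only [h]
    by_cases h0 : M k p * M k q = 0
    · have := νle k p q
      have := ν0 k p q
      rw [h0] at *
      linarith
    · exact div_mul_cancel₀ _ h0
  have h01 : ∀ k p q, 0 ≤ h k p q ∧ h k p q ≤ 1 := by
    intro k p q
    have := mul_nonneg (M0 k p) (M0 k q)
    exact ⟨div_nonneg (ν0 k p q) this, div_le_one_of_le₀ (νle k p q) this⟩
  have hs : ∀ k p q, h k p q = h k q p := by
    intro k p q
    simp only [h]
    rw [νs k p q, mul_comm]
  obtain ⟨code, cmeas, clt, cdiv, cM⟩ := gl_code M M0 M1 M4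
  obtain ⟨W, hWg, hW⟩ := gl_graphon code cmeas clt cdiv M cM ν h ν4 hh h01 hs
  refine ⟨W, hWg, fun m F => ?_⟩
  obtain ⟨L, hL⟩ := hconv m F
  suffices hLW : L = homDensity F W by rwa [← hLW]
  set E := Finset.univ.filter (fun p : Fin m × Fin m => p.1 < p.2 ∧ F.Adj p.1 p.2) with hEdef
  have hE : ∀ e ∈ E, e.1 < e.2 := fun e he => (Finset.mem_filter.mp he).2.1
  have lim1 := gl_density_tendsto code cmeas h h01 W hW E hE
  set t : ℕ → ℝ := fun k => ∫ x : Fin m → ℝ, (∏ e ∈ E, h k (code k (x e.1)) (code k (x e.2)))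
        ∂(Measure.pi fun _ => μ01) with ht
  have hLU : Tendsto (fun i => homDensityFin F (G i)) 𝒰 (nhds L) := hL.mono_left h𝒰
  -- the comparison at level k
  have comp : ∀ k : ℕ, 0 < k → |L - t k| ≤ E.card * (2 / √(k:ℝ)) := by
    intro k hk
    let T : ℕ → ℝ := fun i => (∑ x : Fin m → Fin (N i),
      ∏ e ∈ E, h k (κ i k (x e.1)) (κ i k (x e.2))) / (N i : ℝ)^m
    have hT : Tendsto T 𝒰 (nhds (t k)) := by
      have e1 := gl_int_pi (m := m) (4^k) (code k) (cmeas k) (clt k)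
        (fun y => ∏ e ∈ E, h k (y e.1) (y e.2))
      have e2 := fun i => gl_sum_pi (m := m) (4^k) (κ i k) (κlt i k)
        (fun y => ∏ e ∈ E, h k (y e.1) (y e.2))
      have e3 : t k = ∑ P ∈ Fintype.piFinset (fun _ : Fin m => Finset.range (4^k)),
          (∏ e ∈ E, h k (P e.1) (P e.2)) * ∏ i, M k (P i) := by
        refine e1.trans (Finset.sum_congr rfl fun P hP => ?_)
        congr 1
        refine Finset.prod_congr rfl fun i _ => cM k _ ?_
        exact Finset.mem_range.mp (Fintype.mem_piFinset.mp hP i)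
      rw [e3]
      refine Tendsto.congr (fun i => (e2 i).symm) ?_
      exact tendsto_finsetSum _ fun P _ => (tendsto_finsetProd _ fun i _ => hM k (P i)).const_mul _
    let err : ℕ → ℝ := fun i => ∑ p ∈ Finset.range (4^k), ∑ q ∈ Finset.range (4^k),
      |glNu (A i) (κ i k) p q - h k p q * (glMu (κ i k) p * glMu (κ i k) q)|
    have herr : Tendsto err 𝒰 (nhds 0) := by
      have : (0:ℝ) = ∑ p ∈ Finset.range (4^k), ∑ q ∈ Finset.range (4^k),
          |ν k p q - h k p q * (M k p * M k q)| := by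
        simp [hh]
      rw [this]
      exact tendsto_finsetSum _ fun p _ => tendsto_finsetSum _ fun q _ =>
        ((hν k p q).sub (((hM k p).mul (hM k q)).const_mul _)).abs
    have bound : ∀ᶠ i in (𝒰 : Filter ℕ),
        |homDensityFin F (G i) - T i| ≤ E.card * (2 / √(k:ℝ) + err i) := by
      filter_upwards [Npos] with i hi
      have hn0 : (0:ℝ) < (N i : ℝ) := by exact_mod_cast Nat.pos_of_ne_zero hi
      obtain ⟨f, hf⟩ := κreg i k hk
      have cut := gl_cut_step (A i) (κ i k) (4^k) (κlt i k) f (h k) _ hf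
      have errEq : ∑ p ∈ Finset.range (4^k), ∑ q ∈ Finset.range (4^k),
          |∑ u, ∑ v, (if κ i k u = p then (1:ℝ) else 0) * (if κ i k v = q then 1 else 0) *
            (A i u v - h k p q)| = err i * (N i : ℝ)^2 := by
        simp only [err]
        simp_rw [Finset.sum_mul]
        refine Finset.sum_congr rfl fun p _ => Finset.sum_congr rfl fun q _ => ?_
        rw [← abs_of_nonneg (sq_nonneg (N i : ℝ)), ← abs_mul]
        congr 1
        unfold glNu glMu
        rw [div_mul_div_comm, ← sq, Finset.sum_mul_sum, sub_mul, mul_assoc,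
          div_mul_cancel₀ _ (by positivity), div_mul_cancel₀ _ (by positivity)]
        simp_rw [Finset.mul_sum, ← Finset.sum_sub_distrib]
        exact Finset.sum_congr rfl fun u _ => Finset.sum_congr rfl fun v _ => by ring
      have cnt := gl_counting (m := m) (A i) (fun u v => h k (κ i k u) (κ i k v))
        (2 / √(k:ℝ) + err i) (hA i) (fun u v => h01 _ _ _) (by
          intro a b ha hb
          refine (cut a b ha hb).trans (le_of_eq ?_)
          rw [errEq, Fintype.card_fin]
          ring) E hE
      rw [gl_homDensityFin]
      simp only [T]
      rw [← sub_div, abs_div, abs_of_pos (pow_pos hn0 m), div_le_iff₀ (pow_pos hn0 m)]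
      rw [Fintype.card_fin] at cnt
      exact cnt
    have l1 : Tendsto (fun i => |homDensityFin F (G i) - T i|) 𝒰 (nhds |L - t k|) := (hLU.sub hT).abs
    have l2 : Tendsto (fun i => (E.card : ℝ) * (2 / √(k:ℝ) + err i)) 𝒰
        (nhds (E.card * (2 / √(k:ℝ) + 0))) := (herr.const_add _).const_mul _
    rw [add_zero] at l2
    exact le_of_tendsto_of_tendsto l1 l2 bound
  have l3 : Tendsto (fun k : ℕ => (E.card : ℝ) * (2 / √(k:ℝ))) atTop (nhds 0) := by
    have : Tendsto (fun k : ℕ => √(k:ℝ)) atTop atTop :=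
      Real.tendsto_sqrt_atTop.comp tendsto_natCast_atTop_atTop
    simpa using (this.const_div_atTop 2).const_mul (E.card : ℝ)
  have l4 : Tendsto t atTop (nhds L) := by
    rw [tendsto_iff_dist_tendsto_zero]
    refine squeeze_zero' (Eventually.of_forall fun k => dist_nonneg) ?_ l3
    filter_upwards [eventually_gt_atTop 0] with k hk
    rw [dist_comm, Real.dist_eq]
    exact comp k hk
  exact tendsto_nhds_unique l4 lim1
end
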